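/- arXiv:2305.17225 — 10 statements merged into one kernel-verified Lean document; each statement's English description precedes it below -/
import Mathlib

section
/- Let G be a DAG on [d] with a C¹ conditional-density family (p_i) and, for each k ∈ {1,…,K}, a fat-hand intervention with target set τ_k ⊆ [d] replacing the factors p_j (j ∈ τ_k) by intervened C¹ conditional densities p̃^k_j(z_j ∣ z_{pa^k(j)}) with pa^k(j) ⊆ pa(j), giving interventional joint densities p^k; let p^0 be the unintervened joint density. Then for every C¹ diffeomorphism f : ℝ^d → ℝ^d and every h ∈ S_scaling there exist a strictly positive conditional-density family (q_i) for G and intervened conditional densities q̃^k_j (j ∈ τ_k) with the same targets τ_k and the same post-intervention parent sets pa^k(j), with induced interventional joints q^k, such that f_*P^k = (f∘h)_*Q^k for every k ∈ {0,…,K}, where P^k and Q^k are the probability measures on ℝ^d with densities p^k and q^k. -/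
open MeasureTheory

noncomputable section

/-- `f` depends only on the coordinates in `S`. -/
def DependsOnlyOn {d : ℕ} {α : Type*} (f : (Fin d → ℝ) → α) (S : Finset (Fin d)) : Prop :=
  ∀ z w : Fin d → ℝ, (∀ i ∈ S, z i = w i) → f z = f w

/-- `f` is a C¹ diffeomorphism between (real) normed spaces. -/
def IsC1Diffeo {E F : Type*} [NormedAddCommGroup E] [NormedSpace ℝ E]
    [NormedAddCommGroup F] [NormedSpace ℝ F] (f : E → F) : Prop :=
  ContDiff ℝ 1 f ∧ ∃ g : F → E, ContDiff ℝ 1 g ∧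
    Function.LeftInverse g f ∧ Function.RightInverse g f

/-- The measure on `ℝ^d` with density `ρ` with respect to Lebesgue measure. -/
def densityMeasure {d : ℕ} (ρ : (Fin d → ℝ) → ℝ) : Measure (Fin d → ℝ) :=
  volume.withDensity fun z => ENNReal.ofReal (ρ z)

/-- The measure on `ℝ` with density `r` with respect to Lebesgue measure. -/
def densityMeasure₁ (r : ℝ → ℝ) : Measure ℝ :=
  volume.withDensity fun x => ENNReal.ofReal (r x)

/-- Membership in `S_scaling`: the map acts by an elementwise C¹ diffeomorphism of `ℝ`
on each coordinate. -/
def InSScaling {d : ℕ} (h : (Fin d → ℝ) → (Fin d → ℝ)) : Prop :=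
  ∃ hs : Fin d → ℝ → ℝ, (∀ i, IsC1Diffeo (hs i)) ∧ ∀ (z : Fin d → ℝ) (i : Fin d), h z i = hs i (z i)

/-- Membership in `S_reparam`: a coordinate permutation composed with an element of
`S_scaling`. -/
def InSReparam {d : ℕ} (g : (Fin d → ℝ) → (Fin d → ℝ)) : Prop :=
  ∃ (σ : Equiv.Perm (Fin d)) (hs : Fin d → ℝ → ℝ),
    (∀ i, IsC1Diffeo (hs i)) ∧ ∀ (z : Fin d → ℝ) (i : Fin d), g z i = hs (σ i) (z (σ i))

/-- A C¹ conditional-density family for the DAG on `Fin d` with parent map `pa`: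
each `p i` is strictly positive, C¹, depends only on the coordinates `{i} ∪ pa i`,
and integrates to `1` in the `i`-th coordinate. -/
def IsCondFamily {d : ℕ} (pa : Fin d → Finset (Fin d))
    (p : Fin d → (Fin d → ℝ) → ℝ) : Prop :=
  ∀ i, (∀ z, 0 < p i z) ∧ ContDiff ℝ 1 (p i) ∧
    DependsOnlyOn (p i) (insert i (pa i)) ∧
    ∀ z, (∫ t : ℝ, p i (Function.update z i t)) = 1

/-- A strictly positive C¹ probability density on `ℝ`. -/
def IsC1Density (r : ℝ → ℝ) : Prop :=
  (∀ x, 0 < r x) ∧ ContDiff ℝ 1 r ∧ (∫ x : ℝ, r x) = 1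

/-- The joint density `z ↦ ∏ i, p i z` of a conditional-density family. -/
def jointDensity {d : ℕ} (p : Fin d → (Fin d → ℝ) → ℝ) : (Fin d → ℝ) → ℝ :=
  fun z => ∏ i, p i z

/-- `j` is an ancestor of `i` in the DAG with parent map `pa` (transitive closure of the
parent relation). -/
def IsAnc {d : ℕ} (pa : Fin d → Finset (Fin d)) (j i : Fin d) : Prop :=
  Relation.TransGen (fun a b => a ∈ pa b) j i

lemma c1_deriv_ne {g : ℝ → ℝ} (hg : IsC1Diffeo g) (x : ℝ) : deriv g x ≠ 0 := by
  obtain ⟨h1, k, h2, hl, hr⟩ := hg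
  intro h0
  have a : HasDerivAt g (deriv g x) x := (h1.differentiable one_ne_zero x).hasDerivAt
  have b : HasDerivAt k (deriv k (g x)) (g x) := (h2.differentiable one_ne_zero _).hasDerivAt
  have c := b.comp x a
  have e : k ∘ g = id := funext hl
  rw [e, h0, mul_zero] at c
  exact zero_ne_one (c.unique (hasDerivAt_id x))

lemma c1_bij {g : ℝ → ℝ} (hg : IsC1Diffeo g) : Function.Bijective g := by
  obtain ⟨h1, k, h2, hl, hr⟩ := hg
  exact ⟨hl.injective, hr.surjective⟩

lemma scal_integral {g : ℝ → ℝ} (hg : IsC1Diffeo g) (r : ℝ → ℝ) :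
    (∫ t, r (g t) * |deriv g t|) = ∫ x, r x := by
  have := integral_image_eq_integral_abs_deriv_smul (s := Set.univ) MeasurableSet.univ
    (f := g) (f' := deriv g)
    (fun x _ => ((hg.1.differentiable one_ne_zero x).hasDerivAt).hasDerivWithinAt)
    ((c1_bij hg).1.injOn) r
  rw [Set.image_univ, (c1_bij hg).2.range_eq] at this
  simp only [Measure.restrict_univ, smul_eq_mul] at this
  rw [this]
  simp only [mul_comm]

lemma scal_update {d : ℕ} {h : (Fin d → ℝ) → (Fin d → ℝ)} {hs : Fin d → ℝ → ℝ}
    (hh : ∀ (z : Fin d → ℝ) (i : Fin d), h z i = hs i (z i)) (z : Fin d → ℝ) (i : Fin d) (t : ℝ) :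
    h (Function.update z i t) = Function.update (h z) i (hs i t) := by
  funext j
  rw [hh]
  by_cases hj : j = i
  · subst hj; simp
  · simp [hj, hh]

/-- The properties of one transformed conditional density. -/
lemma scal_cond {d : ℕ} {h : (Fin d → ℝ) → (Fin d → ℝ)} {hs : Fin d → ℝ → ℝ}
    (hd : ∀ i, IsC1Diffeo (hs i))
    (hh : ∀ (z : Fin d → ℝ) (i : Fin d), h z i = hs i (z i)) (i : Fin d) (S : Finset (Fin d))
    (p : (Fin d → ℝ) → ℝ) (h1 : ∀ z, 0 < p z) (h2 : DependsOnlyOn p (insert i S))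
    (h3 : ∀ z, (∫ t : ℝ, p (Function.update z i t)) = 1) :
    (∀ z, 0 < p (h z) * |deriv (hs i) (z i)|) ∧
    DependsOnlyOn (fun z => p (h z) * |deriv (hs i) (z i)|) (insert i S) ∧
    ∀ z, (∫ t : ℝ, (fun z => p (h z) * |deriv (hs i) (z i)|) (Function.update z i t)) = 1 := by
  refine ⟨fun z => mul_pos (h1 _) (abs_pos.2 (c1_deriv_ne (hd i) _)), ?_, ?_⟩
  · intro z w hzw
    have e : p (h z) = p (h w) := h2 _ _ (fun j hj => by rw [hh, hh, hzw j hj])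
    simp only [e, hzw i (Finset.mem_insert_self _ _)]
  · intro z
    simp only [scal_update hh, Function.update_self]
    rw [scal_integral (hd i) (fun x => p (Function.update (h z) i x)), h3]

lemma scal_map {d : ℕ} {h : (Fin d → ℝ) → (Fin d → ℝ)} {hs : Fin d → ℝ → ℝ}
    (hd : ∀ i, IsC1Diffeo (hs i))
    (hh : ∀ (z : Fin d → ℝ) (i : Fin d), h z i = hs i (z i)) (hm : Measurable h)
    (ρ : (Fin d → ℝ) → ℝ) :
    Measure.map h (densityMeasure fun z => ρ (h z) * ∏ i, |deriv (hs i) (z i)|) =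
      densityMeasure ρ := by
  have hinj : Function.Injective h := by
    intro z w e
    funext i
    apply (c1_bij (hd i)).1
    rw [← hh, ← hh, e]
  have hsurj : Function.Surjective h := by
    intro w
    choose z hz using fun i => (c1_bij (hd i)).2 (w i)
    exact ⟨z, funext fun i => by rw [hh, hz]⟩
  let D : (Fin d → ℝ) → (Fin d → ℝ) →L[ℝ] (Fin d → ℝ) := fun z =>
    ContinuousLinearMap.pi fun i => (deriv (hs i) (z i)) • ContinuousLinearMap.proj i
  have hD : ∀ z, HasFDerivAt h (D z) z := by
    intro z
    rw [hasFDerivAt_pi']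
    intro i
    have a : HasDerivAt (hs i) (deriv (hs i) (z i)) (z i) :=
      ((hd i).1.differentiable one_ne_zero _).hasDerivAt
    have b := a.comp_hasFDerivAt z
      (ContinuousLinearMap.proj (R := ℝ) (φ := fun _ : Fin d => ℝ) i).hasFDerivAt
    have e : (fun z => h z i) = hs i ∘ (ContinuousLinearMap.proj (R := ℝ) (φ := fun _ : Fin d => ℝ) i) := by
      funext z; simp [hh]
    rw [e]
    exact b
  have hdet : ∀ z, (D z).det = ∏ i, deriv (hs i) (z i) := by
    intro z
    have e : ((D z : (Fin d → ℝ) →L[ℝ] (Fin d → ℝ)) : (Fin d → ℝ) →ₗ[ℝ] (Fin d → ℝ)) =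
        Matrix.toLin' (Matrix.diagonal fun i => deriv (hs i) (z i)) := by
      apply LinearMap.ext
      intro v
      funext i
      simp [D, Matrix.mulVec_diagonal]
    rw [ContinuousLinearMap.det, e, LinearMap.det_toLin', Matrix.det_diagonal]
  ext s hsm
  unfold densityMeasure
  rw [Measure.map_apply hm hsm, withDensity_apply _ (hm hsm), withDensity_apply _ hsm]
  have key := lintegral_image_eq_lintegral_abs_det_fderiv_mul volume (hm hsm) (f := h) (f' := D)
    (fun z _ => (hD z).hasFDerivWithinAt) hinj.injOn (fun z => ENNReal.ofReal (ρ z))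
  rw [Set.image_preimage_eq s hsurj] at key
  rw [key]
  refine lintegral_congr fun z => ?_
  beta_reduce
  rw [hdet, Finset.abs_prod, mul_comm (ρ (h z)), ENNReal.ofReal_mul (Finset.prod_nonneg fun _ _ => abs_nonneg _)]

/-- **Lemma 1 (unavoidable scaling ambiguity).** Given a latent CBN over the DAG with parent
map `pa` (topologically ordered), with conditional-density family `p`, and fat-hand
interventions with targets `τ k`, post-intervention parent sets `pak k j ⊆ pa j` and
intervened conditional densities `pt k j` (for `j ∈ τ k`), then for every C¹ diffeomorphism
`f` and every `h ∈ S_scaling` there exist a strictly positive conditional-density family `q`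
for the same DAG and intervened conditional densities `qt k j` with the same targets and the
same post-intervention parent sets, such that `f⁎P^k = (f ∘ h)⁎Q^k` in the unintervened
regime and in every interventional regime `k`. -/
theorem scaling_ambiguity_unavoidable {d K : ℕ} (pa : Fin d → Finset (Fin d))
    (hpa : ∀ i : Fin d, ∀ j ∈ pa i, j < i)
    (p : Fin d → (Fin d → ℝ) → ℝ) (hp : IsCondFamily pa p)
    (τ : Fin K → Finset (Fin d))
    (pak : Fin K → Fin d → Finset (Fin d))
    (hpak : ∀ (k : Fin K) (j : Fin d), pak k j ⊆ pa j)
    (pt : Fin K → Fin d → (Fin d → ℝ) → ℝ)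
    (hpt : ∀ k : Fin K, ∀ j ∈ τ k, (∀ z, 0 < pt k j z) ∧ ContDiff ℝ 1 (pt k j) ∧
        DependsOnlyOn (pt k j) (insert j (pak k j)) ∧
        ∀ z, (∫ t : ℝ, pt k j (Function.update z j t)) = 1)
    (f : (Fin d → ℝ) → (Fin d → ℝ)) (hf : IsC1Diffeo f)
    (h : (Fin d → ℝ) → (Fin d → ℝ)) (hh : InSScaling h) :
    ∃ (q : Fin d → (Fin d → ℝ) → ℝ) (qt : Fin K → Fin d → (Fin d → ℝ) → ℝ),
      (∀ i : Fin d, (∀ z, 0 < q i z) ∧ DependsOnlyOn (q i) (insert i (pa i)) ∧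
          ∀ z, (∫ t : ℝ, q i (Function.update z i t)) = 1) ∧
      (∀ k : Fin K, ∀ j ∈ τ k, (∀ z, 0 < qt k j z) ∧
          DependsOnlyOn (qt k j) (insert j (pak k j)) ∧
          ∀ z, (∫ t : ℝ, qt k j (Function.update z j t)) = 1) ∧
      Measure.map f (densityMeasure (jointDensity p)) =
        Measure.map (f ∘ h) (densityMeasure (jointDensity q)) ∧
      ∀ k : Fin K,
        Measure.map f (densityMeasure fun z =>
            (∏ j ∈ τ k, pt k j z) * ∏ i ∈ (τ k)ᶜ, p i z) =
        Measure.map (f ∘ h) (densityMeasure fun z =>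
            (∏ j ∈ τ k, qt k j z) * ∏ i ∈ (τ k)ᶜ, q i z) := by
  obtain ⟨hs, hd, hh⟩ := hh
  have hm : Measurable h := by
    rw [measurable_pi_iff]
    intro i
    simp only [hh]
    exact (hd i).1.continuous.measurable.comp (measurable_pi_apply i)
  have hfm : Measurable f := hf.1.continuous.measurable
  refine ⟨fun i z => p i (h z) * |deriv (hs i) (z i)|,
    fun k i z => pt k i (h z) * |deriv (hs i) (z i)|, ?_, ?_, ?_, ?_⟩
  · intro i
    obtain ⟨a, _, b, c⟩ := hp i
    exact scal_cond hd hh i (pa i) (p i) a b c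
  · intro k j hj
    obtain ⟨a, _, b, c⟩ := hpt k j hj
    exact scal_cond hd hh j (pak k j) (pt k j) a b c
  · rw [← Measure.map_map hfm hm, ← scal_map hd hh hm (jointDensity p)]
    congr 3
    funext z
    simp only [jointDensity, Finset.prod_mul_distrib]
  · intro k
    rw [← Measure.map_map hfm hm, ← scal_map hd hh hm
      (fun z => (∏ j ∈ τ k, pt k j z) * ∏ i ∈ (τ k)ᶜ, p i z)]
    congr 3
    funext z
    simp only [Finset.prod_mul_distrib]
    rw [← Finset.prod_mul_prod_compl (τ k) (fun i => |deriv (hs i) (z i)|)]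
    ring
end
end

section
/- Let G be a DAG on [d] and let P, Q be probability measures on ℝ^d with strictly positive joint densities given by the Markov factorizations p(z) = ∏_{i=1}^d p_i(z_i ∣ z_{pa(i)}) and q(z) = ∏_{i=1}^d q_i(z_i ∣ z_{pa(i)}) for C¹ conditional-density families (p_i), (q_i). Let φ_1,…,φ_d : ℝ → ℝ be strictly monotone C¹ diffeomorphisms and φ(z) := (φ_1(z_1),…,φ_d(z_d)). Then Q = φ_*P if and only if for every i ∈ [d], every z_i ∈ ℝ and every z_{pa(i)} ∈ ℝ^{pa(i)}: p_i(z_i ∣ z_{pa(i)}) = q_i(φ_i(z_i) ∣ φ_{pa(i)}(z_{pa(i)})) · |φ_i′(z_i)|, where φ_{pa(i)} applies φ_j to coordinate j for each j ∈ pa(i). -/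
open MeasureTheory

noncomputable section

/-- Uniqueness of the mechanisms of a Markov factorization. -/
theorem mechanisms_unique {d : ℕ} (pa : Fin d → Finset (Fin d))
    (hpa : ∀ i : Fin d, ∀ j ∈ pa i, j < i)
    (p r : Fin d → (Fin d → ℝ) → ℝ)
    (hp0 : ∀ i z, 0 < p i z)
    (hpd : ∀ i, DependsOnlyOn (p i) (insert i (pa i)))
    (hrd : ∀ i, DependsOnlyOn (r i) (insert i (pa i)))
    (hp1 : ∀ i z, (∫ t : ℝ, p i (Function.update z i t)) = 1)
    (hr1 : ∀ i z, (∫ t : ℝ, r i (Function.update z i t)) = 1)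
    (h : ∀ z, ∏ i, p i z = ∏ i, r i z) (i : Fin d) (z : Fin d → ℝ) : p i z = r i z := by
  classical
  have filt : ∀ (k : ℕ) (hk : k < d) (f : Fin d → ℝ),
      ∏ i with i.val < k + 1, f i = f ⟨k, hk⟩ * ∏ i with i.val < k, f i := by
    intro k hk f
    rw [← Finset.prod_insert (by simp)]
    congr 1
    ext j
    simp only [Finset.mem_filter, Finset.mem_univ, true_and, Finset.mem_insert, Fin.ext_iff]
    omega
  have marg : ∀ (f : Fin d → (Fin d → ℝ) → ℝ),
      (∀ i, DependsOnlyOn (f i) (insert i (pa i))) →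
      (∀ i z, (∫ t : ℝ, f i (Function.update z i t)) = 1) → ∀ (k : ℕ) (hk : k < d) z,
      ∫ t : ℝ, ∏ i with i.val < k + 1, f i (Function.update z ⟨k, hk⟩ t)
        = ∏ i with i.val < k, f i z := by
    intro f hfd hf1 k hk z
    have : ∀ t : ℝ, ∏ i with i.val < k + 1, f i (Function.update z ⟨k, hk⟩ t)
        = f ⟨k, hk⟩ (Function.update z ⟨k, hk⟩ t) * ∏ i with i.val < k, f i z := by
      intro t
      rw [filt k hk]
      congr 1
      apply Finset.prod_congr rfl
      intro j hj
      simp only [Finset.mem_filter, Finset.mem_univ, true_and] at hj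
      apply hfd j
      intro l hl
      apply Function.update_of_ne
      rintro rfl
      rcases Finset.mem_insert.1 hl with h1 | h1
      · rw [← h1] at hj
        simp at hj
      · have h2 := hpa _ _ h1
        rw [Fin.lt_def] at h2
        simp only at h2
        omega
    simp_rw [this]
    rw [integral_mul_const, hf1, one_mul]
  have key : ∀ m k : ℕ, k + m = d → ∀ z, ∏ i with i.val < k, p i z = ∏ i with i.val < k, r i z := by
    intro m
    induction m with
    | zero =>
      intro k hk z
      have : (Finset.univ.filter fun i : Fin d => i.val < k) = Finset.univ := by
        ext j
        have := j.2
        simp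
        omega
      rw [this]
      exact h z
    | succ m ih =>
      intro k hk z
      rw [← marg p hpd hp1 k (by omega) z, ← marg r hrd hr1 k (by omega) z]
      congr 1
      ext t
      exact ih (k + 1) (by omega) _
  have hi := i.2
  have h1 := key (d - (i.val + 1)) (i.val + 1) (by omega) z
  have h0 := key (d - i.val) i.val (by omega) z
  rw [filt i.val hi, filt i.val hi, ← h0] at h1
  exact mul_right_cancel₀ (Finset.prod_pos fun j _ => hp0 j z).ne' h1

/-- **Lemma (change of mechanisms under componentwise reparametrization).** Let `p`, `q` be
C¹ conditional-density families for the DAG with parent map `pa` (topologically ordered),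
with joint measures `P`, `Q`, and let `φ i : ℝ → ℝ` be strictly monotone C¹ diffeomorphisms,
acting componentwise as `z ↦ (φ 1 (z 1), …, φ d (z d))`. Then `Q = φ⁎P` if and only if for
every node `i` and every `z`,
`p i z = q i (φ applied componentwise to z) * |(φ i)′ (z i)|`. -/
theorem pushforward_iff_mechanisms_transform {d : ℕ} (pa : Fin d → Finset (Fin d))
    (hpa : ∀ i : Fin d, ∀ j ∈ pa i, j < i)
    (p q : Fin d → (Fin d → ℝ) → ℝ)
    (hp : IsCondFamily pa p) (hq : IsCondFamily pa q)
    (φ : Fin d → ℝ → ℝ)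
    (hφ : ∀ i, IsC1Diffeo (φ i) ∧ (StrictMono (φ i) ∨ StrictAnti (φ i))) :
    densityMeasure (jointDensity q) =
        Measure.map (fun (z : Fin d → ℝ) (i : Fin d) => φ i (z i))
          (densityMeasure (jointDensity p)) ↔
      ∀ (i : Fin d) (z : Fin d → ℝ),
        p i z = q i (fun j => φ j (z j)) * |deriv (φ i) (z i)| := by
  classical
  have hdiff : ∀ i x, HasDerivAt (φ i) (deriv (φ i) x) x := fun i x =>
    ((hφ i).1.1.differentiable one_ne_zero x).hasDerivAt
  have hφc : ∀ i, Continuous (φ i) := fun i => (hφ i).1.1.continuous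
  have hdc : ∀ i, Continuous (deriv (φ i)) := fun i => (hφ i).1.1.continuous_deriv le_rfl
  choose g hgc hgl hgr using fun i => (hφ i).1.2
  have hinj : ∀ i, Function.Injective (φ i) := fun i => (hgl i).injective
  have hsurj : ∀ i, Function.Surjective (φ i) := fun i => (hgr i).surjective
  set Φ : (Fin d → ℝ) → (Fin d → ℝ) := fun z i => φ i (z i) with hΦ
  let G : (Fin d → ℝ) → (Fin d → ℝ) := fun z i => g i (z i)
  have hΦc : Continuous Φ := by fun_prop
  have hGc : Continuous G := continuous_pi fun i => (hgc i).continuous.comp (continuous_apply i)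
  have hGΦ : ∀ z, G (Φ z) = z := fun z => funext fun i => hgl i (z i)
  have hΦG : ∀ z, Φ (G z) = z := fun z => funext fun i => hgr i (z i)
  let r : Fin d → (Fin d → ℝ) → ℝ := fun i z => q i (Φ z) * |deriv (φ i) (z i)|
  have hrc : ∀ i, Continuous (r i) := fun i =>
    ((hq i).2.1.continuous.comp hΦc).mul (((hdc i).comp (continuous_apply i)).abs)
  have hrd : ∀ i, DependsOnlyOn (r i) (insert i (pa i)) := by
    intro i z w hzw
    simp only [r]
    rw [(hq i).2.2.1 (Φ z) (Φ w) (fun j hj => by simp only [hΦ, hzw j hj]),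
      hzw i (Finset.mem_insert_self _ _)]
  have hr1 : ∀ i z, (∫ t : ℝ, r i (Function.update z i t)) = 1 := by
    intro i z
    have h1 := integral_image_eq_integral_abs_deriv_smul (s := Set.univ) MeasurableSet.univ
      (fun x _ => (hdiff i x).hasDerivWithinAt) (hinj i).injOn
      (fun t => q i (Function.update (Φ z) i t))
    rw [Set.image_univ, (hsurj i).range_eq] at h1
    simp only [Measure.restrict_univ] at h1
    rw [(hq i).2.2.2 (Φ z)] at h1
    rw [h1]
    congr 1
    ext t
    have h2 : Φ (Function.update z i t) = Function.update (Φ z) i (φ i t) := by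
      ext j
      by_cases hj : j = i
      · subst hj
        simp [hΦ]
      · simp [hΦ, hj]
    simp only [r, h2, Function.update_self, smul_eq_mul]
    ring
  have hJ : ∀ ρ : Fin d → (Fin d → ℝ) → ℝ, (∀ i, Continuous (ρ i)) →
      Continuous (jointDensity ρ) := fun ρ h => continuous_finsetProd _ fun i _ => h i
  have hq0 : ∀ z, 0 ≤ jointDensity q z := fun z => Finset.prod_nonneg fun i _ => ((hq i).1 z).le
  have hp0 : ∀ z, 0 ≤ jointDensity p z := fun z => Finset.prod_nonneg fun i _ => ((hp i).1 z).le
  have hr0 : ∀ z, 0 ≤ jointDensity r z := fun z => Finset.prod_nonneg fun i _ =>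
    mul_nonneg ((hq i).1 _).le (abs_nonneg _)
  -- change of variables
  have hmap : densityMeasure (jointDensity q) = Measure.map Φ (densityMeasure (jointDensity r)) := by
    ext s hs
    have hs' : MeasurableSet (Φ ⁻¹' s) := hΦc.measurable hs
    rw [Measure.map_apply hΦc.measurable hs]
    unfold densityMeasure
    rw [withDensity_apply _ hs, withDensity_apply _ hs']
    have himg : Φ '' (Φ ⁻¹' s) = s :=
      Set.image_preimage_eq s (Function.RightInverse.surjective hΦG)
    let Φ' : (Fin d → ℝ) → ((Fin d → ℝ) →L[ℝ] (Fin d → ℝ)) := fun z =>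
      ContinuousLinearMap.pi fun i =>
        (ContinuousLinearMap.toSpanSingleton ℝ (deriv (φ i) (z i))).comp
          (ContinuousLinearMap.proj i)
    have hder : ∀ z, HasFDerivAt Φ (Φ' z) z := by
      intro z
      apply hasFDerivAt_pi.2
      intro i
      exact (hdiff i (z i)).hasFDerivAt.comp z (hasFDerivAt_apply i z)
    have hcov := lintegral_image_eq_lintegral_abs_det_fderiv_mul volume hs'
      (fun x _ => (hder x).hasFDerivWithinAt) (Function.LeftInverse.injective hGΦ).injOn
      (fun z => ENNReal.ofReal (jointDensity q z))
    rw [himg] at hcov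
    rw [hcov]
    congr 1
    ext z
    have hdet : (Φ' z).det = ∏ i, deriv (φ i) (z i) := by
      simp only [Φ']
      rw [ContinuousLinearMap.det_pi]
      simp
    rw [hdet, ← ENNReal.ofReal_mul (abs_nonneg _), Finset.abs_prod]
    congr 1
    simp only [jointDensity, r, Finset.prod_mul_distrib]
    ring
  constructor
  · intro h i z
    have h1 : densityMeasure (jointDensity p) = densityMeasure (jointDensity r) := by
      have h2 := congrArg (Measure.map G) (h.symm.trans hmap)
      rw [Measure.map_map hGc.measurable hΦc.measurable,
        Measure.map_map hGc.measurable hΦc.measurable] at h2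
      have h3 : G ∘ Φ = id := funext hGΦ
      simpa [h3] using h2
    have hpc := hJ p fun i => (hp i).2.1.continuous
    have hrc' := hJ r hrc
    unfold densityMeasure at h1
    replace h1 := (withDensity_eq_iff_of_sigmaFinite
      (ENNReal.continuous_ofReal.comp hpc).measurable.aemeasurable
      (ENNReal.continuous_ofReal.comp hrc').measurable.aemeasurable).1 h1
    have h4 : jointDensity p =ᵐ[volume] jointDensity r := by
      filter_upwards [h1] with z hz
      exact (ENNReal.ofReal_eq_ofReal_iff (hp0 z) (hr0 z)).1 hz
    have h5 := (hpc.ae_eq_iff_eq volume hrc').1 h4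
    exact mechanisms_unique pa hpa p r (fun i => (hp i).1) (fun i => (hp i).2.2.1) hrd
      (fun i => (hp i).2.2.2) hr1 (fun z => congrFun h5 z) i z
  · intro h
    have : p = r := funext fun i => funext fun z => h i z
    rw [this]
    exact hmap
end
end

section
/- Let P_A and P_C be probability measures on ℝ with differentiable, strictly positive densities with respect to Lebesgue measure. Let f : ℝ × ℝ^d → ℝ be differentiable, and suppose that for every b ∈ ℝ^d the map a ↦ f(a, b) pushes P_A forward to P_C, i.e., Measure.map (f(·, b)) P_A = P_C. Then f is constant in its second argument: f(a, b) = f(a, b′) for all a ∈ ℝ and all b, b′ ∈ ℝ^d. -/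
open MeasureTheory

noncomputable section

lemma aux_deriv_ne_zero (pA pC g : ℝ → ℝ)
    (hpA : Continuous pA) (hpA_pos : ∀ x, 0 < pA x)
    (hpC : Continuous pC) (hpC_pos : ∀ x, 0 < pC x)
    (hg : Differentiable ℝ g)
    (hpush : Measure.map g (volume.withDensity fun x => ENNReal.ofReal (pA x)) =
        volume.withDensity fun x => ENNReal.ofReal (pC x)) (a : ℝ) : deriv g a ≠ 0 := by
  intro h0
  have hd : HasDerivAt g 0 a := h0 ▸ (hg a).hasDerivAt
  set m := pA a / 2 with hm
  set M := pC (g a) + 1 with hM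
  have hmpos : 0 < m := half_pos (hpA_pos a)
  have hMpos : 0 < M := by have := hpC_pos (g a); linarith
  set δ := m / (2 * M) with hδ
  have hδpos : 0 < δ := by positivity
  have e1 : ∀ᶠ x in nhds a, m < pA x :=
    (hpA.tendsto a).eventually (lt_mem_nhds (by rw [hm]; linarith [hpA_pos a]))
  have e2 : ∀ᶠ y in nhds (g a), pC y < M :=
    (hpC.tendsto (g a)).eventually (gt_mem_nhds (by rw [hM]; linarith))
  have e3 : ∀ᶠ x in nhds a, |g x - g a| ≤ δ * |x - a| := by
    have := (hasDerivAt_iff_isLittleO.1 hd).def hδpos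
    simpa using this
  obtain ⟨r, hr, hr'⟩ := Metric.eventually_nhds_iff.1 (e1.and e3)
  obtain ⟨s, hs, hs'⟩ := Metric.eventually_nhds_iff.1 e2
  set ε := min (r / 2) (s / (2 * δ)) with hε
  have hεpos : 0 < ε := by positivity
  have hεr : ε < r := lt_of_le_of_lt (min_le_left _ _) (by linarith)
  have hεs : δ * ε < s := by
    have : ε ≤ s / (2 * δ) := min_le_right _ _
    rw [le_div_iff₀ (by positivity)] at this
    nlinarith
  set I := Set.Icc (a - ε) (a + ε) with hI
  set J := Set.Icc (g a - δ * ε) (g a + δ * ε) with hJ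
  have hIx : ∀ x ∈ I, |x - a| ≤ ε := fun x hx => abs_le.2 ⟨by linarith [hx.1], by linarith [hx.2]⟩
  have hJx : ∀ x ∈ J, |x - g a| ≤ δ * ε :=
    fun x hx => abs_le.2 ⟨by linarith [hx.1], by linarith [hx.2]⟩
  have hsub : I ⊆ g ⁻¹' J := by
    intro x hx
    have h1 := (hr' (y := x) (by rw [Real.dist_eq]; exact (hIx x hx).trans_lt hεr)).2
    have h2 : |g x - g a| ≤ δ * ε := h1.trans (by gcongr; exact hIx x hx)
    rw [abs_le] at h2
    exact ⟨by linarith, by linarith⟩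
  have hJm : MeasurableSet J := measurableSet_Icc
  have hIm : MeasurableSet I := measurableSet_Icc
  have k1 : ENNReal.ofReal m * volume I ≤
      (volume.withDensity fun x => ENNReal.ofReal (pA x)) I := by
    rw [withDensity_apply _ hIm, ← setLIntegral_const]
    refine setLIntegral_mono' hIm fun x hx => ENNReal.ofReal_le_ofReal ?_
    exact (hr' (y := x) (by rw [Real.dist_eq]; exact (hIx x hx).trans_lt hεr)).1.le
  have k2 : (volume.withDensity fun x => ENNReal.ofReal (pC x)) J ≤
      ENNReal.ofReal M * volume J := by
    rw [withDensity_apply _ hJm, ← setLIntegral_const]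
    refine setLIntegral_mono' hJm fun x hx => ENNReal.ofReal_le_ofReal ?_
    exact (hs' (y := x) (by rw [Real.dist_eq]; exact (hJx x hx).trans_lt hεs)).le
  have k3 := k1.trans (measure_mono hsub)
  rw [← Measure.map_apply hg.continuous.measurable hJm, hpush] at k3
  have k4 := k3.trans k2
  rw [hI, hJ, Real.volume_Icc, Real.volume_Icc, ← ENNReal.ofReal_mul hmpos.le,
    ← ENNReal.ofReal_mul hMpos.le, ENNReal.ofReal_le_ofReal_iff (by
      apply mul_nonneg hMpos.le; nlinarith [mul_pos hδpos hεpos])] at k4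
  have h5 : M * δ = m / 2 := by rw [hδ]; field_simp
  have h6 : M * (g a + δ * ε - (g a - δ * ε)) = 2 * (M * δ) * ε := by ring
  rw [h6, h5] at k4
  nlinarith [mul_pos hmpos hεpos]

lemma aux_cdf (pA pC g : ℝ → ℝ)
    (hpA : Continuous pA) (hpA_pos : ∀ x, 0 < pA x)
    (hpC : Continuous pC) (hpC_pos : ∀ x, 0 < pC x)
    (hg : Differentiable ℝ g)
    (hpush : Measure.map g (volume.withDensity fun x => ENNReal.ofReal (pA x)) =
        volume.withDensity fun x => ENNReal.ofReal (pC x)) (a : ℝ) :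
    (volume.withDensity fun x => ENNReal.ofReal (pC x)) (Set.Iic (g a)) =
      (volume.withDensity fun x => ENNReal.ofReal (pA x)) (Set.Iic a) ∨
    (volume.withDensity fun x => ENNReal.ofReal (pC x)) (Set.Iic (g a)) =
      (volume.withDensity fun x => ENNReal.ofReal (pA x)) (Set.Ici a) := by
  have hne := aux_deriv_ne_zero pA pC g hpA hpA_pos hpC hpC_pos hg hpush
  rw [← hpush, Measure.map_apply hg.continuous.measurable measurableSet_Iic]
  rcases hasDerivWithinAt_forall_lt_or_forall_gt_of_forall_ne (s := Set.univ) convex_univ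
    (fun x _ => (hg x).hasDerivAt.hasDerivWithinAt) (fun x _ => hne x) with h | h
  · right
    have hm := strictAnti_of_deriv_neg (fun x => h x trivial)
    congr 1
    ext x
    simp [hm.le_iff_ge]
  · left
    have hm := strictMono_of_deriv_pos (fun x => h x trivial)
    congr 1
    ext x
    simp [hm.le_iff_le]

lemma aux_strict (pC : ℝ → ℝ) (hpC : Continuous pC) (hpC_pos : ∀ x, 0 < pC x)
    (hpC_int : (∫ x : ℝ, pC x) = 1) :
    StrictMono fun x => (volume.withDensity fun x => ENNReal.ofReal (pC x)) (Set.Iic x) := by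
  have hi : Integrable pC := by
    by_contra h
    rw [integral_undef h] at hpC_int
    exact zero_ne_one hpC_int
  have hfin := isFiniteMeasure_withDensity_ofReal hi.2
  have hac : volume ≪ (volume.withDensity fun x => ENNReal.ofReal (pC x)) :=
    withDensity_absolutelyContinuous' (by fun_prop)
      (Filter.Eventually.of_forall fun x => by simp [hpC_pos x])
  intro x y hxy
  have hpos : (volume.withDensity fun x => ENNReal.ofReal (pC x)) (Set.Ioc x y) ≠ 0 := by
    intro h
    have := hac h
    simp at this
    linarith
  show _ < (volume.withDensity fun x => ENNReal.ofReal (pC x)) (Set.Iic y)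
  rw [← Set.Iic_union_Ioc_eq_Iic hxy.le, measure_union (Set.Iic_disjoint_Ioc le_rfl)
    measurableSet_Ioc]
  exact ENNReal.lt_add_right (measure_ne_top _ _) hpos

/-- **Lemma (Brehmer et al., Lemma 2).** If `P_A` and `P_C` are probability measures on `ℝ`
with differentiable strictly positive densities, `f : ℝ × ℝ^d → ℝ` is differentiable, and for
every `b` the map `a ↦ f (a, b)` pushes `P_A` forward to `P_C`, then `f` is constant in its
second argument. -/
theorem measure_preserving_const_in_second_arg {d : ℕ} (pA pC : ℝ → ℝ)
    (hpA_diff : Differentiable ℝ pA) (hpA_pos : ∀ x, 0 < pA x)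
    (hpA_int : (∫ x : ℝ, pA x) = 1)
    (hpC_diff : Differentiable ℝ pC) (hpC_pos : ∀ x, 0 < pC x)
    (hpC_int : (∫ x : ℝ, pC x) = 1)
    (f : ℝ × (Fin d → ℝ) → ℝ) (hf : Differentiable ℝ f)
    (hpush : ∀ b : Fin d → ℝ,
      Measure.map (fun a => f (a, b))
          (volume.withDensity fun x => ENNReal.ofReal (pA x)) =
        volume.withDensity fun x => ENNReal.ofReal (pC x)) :
    ∀ (a : ℝ) (b b' : Fin d → ℝ), f (a, b) = f (a, b') := by
  intro a
  have hinj := (aux_strict pC hpC_diff.continuous hpC_pos hpC_int).injective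
  have key := fun b => aux_cdf pA pC (fun a => f (a, b)) hpA_diff.continuous hpA_pos
    hpC_diff.continuous hpC_pos (by fun_prop) (hpush b) a
  have hc : Continuous fun b => f (a, b) := by have := hf.continuous; fun_prop
  have main : ∀ b b', ¬ f (a, b) < f (a, b') := by
    intro b b' hlt
    obtain ⟨c, hc'⟩ := mem_range_of_exists_le_of_exists_ge hc
      (c := (f (a, b) + f (a, b')) / 2) ⟨b, by linarith⟩ ⟨b', by linarith⟩
    have n1 : f (a, b) ≠ f (a, c) := by simp only at hc'; intro h; linarith
    have n2 : f (a, c) ≠ f (a, b') := by simp only at hc'; intro h; linarith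
    have n3 : f (a, b) ≠ f (a, b') := hlt.ne
    have i1 := hinj.ne n1
    have i2 := hinj.ne n2
    have i3 := hinj.ne n3
    have k1 := key b
    have k2 := key c
    have k3 := key b'
    rcases k1 with k1 | k1 <;> rcases k2 with k2 | k2 <;> rcases k3 with k3 | k3 <;>
      simp_all
  intro b b'
  exact le_antisymm (not_lt.1 (main b' b)) (not_lt.1 (main b b'))
end
end

section
/- Let G be a DAG on [d]. Let (p_i) and (q_i) be C¹ conditional-density families for G, and for each k ∈ [d] let p̃_k and q̃_k be intervened C¹ conditional densities on node k with a common post-intervention parent set pa^k(k) ⊆ pa(k), giving interventional joint densities p^k and q^k; let p^0, q^0 be the unintervened joint densities. Assume the interventional discrepancy holds for every node k ∈ [d] in both families. Let f, f′ : ℝ^d → ℝ^d be C¹ diffeomorphisms such that f_*P^k = f′_*Q^k for every k ∈ {0,1,…,d}, where P^k, Q^k are the measures with densities p^k, q^k. Then φ := f′⁻¹ ∘ f satisfies ∂φ_i/∂z_j(z) = 0 for every z ∈ ℝ^d, every i ∈ [d], and every j ∉ anc̄(i); that is, each component φ_i is a function of the coordinates z_{anc̄(i)} only. -/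
open MeasureTheory

noncomputable section

theorem ratio_aux {d : ℕ} (φ ψ : (Fin d → ℝ) → (Fin d → ℝ))
    (hφ : Continuous φ) (hψ : Continuous ψ) (h1 : Function.LeftInverse ψ φ)
    (a a' b b' : (Fin d → ℝ) → ℝ)
    (ca : Continuous a) (ca' : Continuous a') (cb : Continuous b) (cb' : Continuous b')
    (pa : ∀ z, 0 < a z) (pa' : ∀ z, 0 < a' z) (pb : ∀ z, 0 < b z) (pb' : ∀ z, 0 < b' z)
    (m : Measure.map φ (densityMeasure a) = densityMeasure b)
    (m' : Measure.map φ (densityMeasure a') = densityMeasure b') (z : Fin d → ℝ) :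
    a' z / a z = b' (φ z) / b (φ z) := by
  have cs : Continuous fun w => b' w / b w := cb'.div cb fun w => (pb w).ne'
  have ms : Measurable fun w => ENNReal.ofReal (b' w / b w) := cs.measurable.ennreal_ofReal
  have ma : Measurable fun w => ENNReal.ofReal (a w) := ca.measurable.ennreal_ofReal
  have mb : Measurable fun w => ENNReal.ofReal (b w) := cb.measurable.ennreal_ofReal
  have cR : Continuous fun w => a w * (b' (φ w) / b (φ w)) := ca.mul (cs.comp hφ)
  have key : (volume : Measure (Fin d → ℝ)).withDensity (fun w => ENNReal.ofReal (a' w)) =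
      volume.withDensity (fun w => ENNReal.ofReal (a w * (b' (φ w) / b (φ w)))) := by
    have e1 : (volume : Measure (Fin d → ℝ)).withDensity
        (fun w => ENNReal.ofReal (a w * (b' (φ w) / b (φ w)))) =
        (densityMeasure a).withDensity (fun w => ENNReal.ofReal (b' (φ w) / b (φ w))) := by
      unfold densityMeasure
      have msφ : Measurable fun w => ENNReal.ofReal (b' (φ w) / b (φ w)) :=
        ms.comp hφ.measurable
      rw [← withDensity_mul _ ma msφ]
      congr 1
      ext w
      simp only [Pi.mul_apply]
      rw [ENNReal.ofReal_mul (pa w).le]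
    have e2 : densityMeasure b' =
        (densityMeasure b).withDensity (fun w => ENNReal.ofReal (b' w / b w)) := by
      unfold densityMeasure
      rw [← withDensity_mul _ mb ms]
      congr 1
      ext w
      simp only [Pi.mul_apply]
      rw [← ENNReal.ofReal_mul (pb w).le, mul_div_cancel₀ _ (pb w).ne']
    rw [e1]
    ext s hs
    have ht : MeasurableSet (ψ ⁻¹' s) := hψ.measurable hs
    have hst : φ ⁻¹' (ψ ⁻¹' s) = s := by
      ext w; simp [h1 w]
    have e3 : densityMeasure a' s = densityMeasure b' (ψ ⁻¹' s) := by
      rw [← m', Measure.map_apply hφ.measurable ht, hst]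
    change densityMeasure a' s = _
    rw [e3, e2, withDensity_apply _ ht, withDensity_apply _ hs, ← m,
      setLIntegral_map ht ms hφ.measurable, hst]
  have key2 := (withDensity_eq_iff_of_sigmaFinite
    ca'.measurable.ennreal_ofReal.aemeasurable cR.measurable.ennreal_ofReal.aemeasurable).1 key
  have key3 := (Continuous.ae_eq_iff_eq volume (ENNReal.continuous_ofReal.comp ca')
    (ENNReal.continuous_ofReal.comp cR)).1 key2
  have := congrFun key3 z
  simp only [Function.comp] at this
  have pr : 0 < b' (φ z) / b (φ z) := div_pos (pb' _) (pb _)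
  rw [ENNReal.ofReal_eq_ofReal_iff (pa' z).le (mul_pos (pa z) pr).le] at this
  rw [this, mul_div_cancel_left₀ _ (pa z).ne']

theorem fderiv_zero_of_dependsOnlyOn {d : ℕ} (h : (Fin d → ℝ) → ℝ) (S : Finset (Fin d))
    (hS : DependsOnlyOn h S) (hd : Differentiable ℝ h) (j : Fin d) (hj : j ∉ S)
    (z : Fin d → ℝ) : fderiv ℝ h z (Pi.single j 1) = 0 := by
  rw [← (hd z).lineDeriv_eq_fderiv]
  unfold lineDeriv
  have : (fun t : ℝ => h (z + t • Pi.single j 1)) = fun _ => h z := by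
    funext t
    apply hS
    intro i hi
    have : i ≠ j := fun e => hj (e ▸ hi)
    simp [this]
  rw [this]
  simp

/-- **Theorem 1 (i).** CauCA with one (perfect or imperfect) stochastic single-node
intervention per node, satisfying interventional discrepancy in both models: if the two
models generate the same pushforward distributions in the unintervened regime and in every
interventional regime, then each component `φ i` of `φ := f′⁻¹ ∘ f` depends only on the
coordinates in the ancestral closure of `i`; i.e. `∂φ i / ∂z j ≡ 0` for every
`j ∉ anc̄(i)`. -/
theorem cauca_single_node_identifiability_ancestral {d : ℕ}
    (pa : Fin d → Finset (Fin d))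
    (hpa : ∀ i : Fin d, ∀ j ∈ pa i, j < i)
    (p q : Fin d → (Fin d → ℝ) → ℝ)
    (hp : IsCondFamily pa p) (hq : IsCondFamily pa q)
    (pak : Fin d → Finset (Fin d)) (hpak : ∀ k, pak k ⊆ pa k)
    (pt qt : Fin d → (Fin d → ℝ) → ℝ)
    (hpt : ∀ k : Fin d, (∀ z, 0 < pt k z) ∧ ContDiff ℝ 1 (pt k) ∧
        DependsOnlyOn (pt k) (insert k (pak k)) ∧
        ∀ z, (∫ t : ℝ, pt k (Function.update z k t)) = 1)
    (hqt : ∀ k : Fin d, (∀ z, 0 < qt k z) ∧ ContDiff ℝ 1 (qt k) ∧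
        DependsOnlyOn (qt k) (insert k (pak k)) ∧
        ∀ z, (∫ t : ℝ, qt k (Function.update z k t)) = 1)
    (hdiscp : ∀ k : Fin d, ∀ᵐ (z : Fin d → ℝ) ∂volume,
        fderiv ℝ (fun w => Real.log (p k w) - Real.log (pt k w)) z (Pi.single k 1) ≠ 0)
    (hdiscq : ∀ k : Fin d, ∀ᵐ (z : Fin d → ℝ) ∂volume,
        fderiv ℝ (fun w => Real.log (q k w) - Real.log (qt k w)) z (Pi.single k 1) ≠ 0)
    (f f' g' : (Fin d → ℝ) → (Fin d → ℝ))
    (hf : IsC1Diffeo f) (hf' : ContDiff ℝ 1 f') (hg' : ContDiff ℝ 1 g')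
    (hinv₁ : Function.LeftInverse g' f') (hinv₂ : Function.RightInverse g' f')
    (hmatch0 : Measure.map f (densityMeasure (jointDensity p)) =
        Measure.map f' (densityMeasure (jointDensity q)))
    (hmatch : ∀ k : Fin d,
        Measure.map f (densityMeasure fun z =>
            pt k z * ∏ i ∈ ({k} : Finset (Fin d))ᶜ, p i z) =
        Measure.map f' (densityMeasure fun z =>
            qt k z * ∏ i ∈ ({k} : Finset (Fin d))ᶜ, q i z)) :
    ∀ i j : Fin d, ¬(IsAnc pa j i ∨ j = i) →
      ∀ z : Fin d → ℝ, fderiv ℝ (fun w => g' (f w) i) z (Pi.single j 1) = 0 := by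
  obtain ⟨hfC, g, hg, hgf, hfg⟩ := hf
  set φ : (Fin d → ℝ) → (Fin d → ℝ) := fun w => g' (f w) with hφdef
  have hφ : ContDiff ℝ 1 φ := hg'.comp hfC
  set ψ : (Fin d → ℝ) → (Fin d → ℝ) := fun w => g (f' w) with hψdef
  have hψ : ContDiff ℝ 1 ψ := hg.comp hf'
  have hψφ : Function.LeftInverse ψ φ := fun w => by
    simp only [hφdef, hψdef]; rw [hinv₂, hgf]
  have hφψ : Function.RightInverse ψ φ := fun w => by
    simp only [hφdef, hψdef]; rw [hfg, hinv₁]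
  have push : ∀ μ ν : Measure (Fin d → ℝ), Measure.map f μ = Measure.map f' ν →
      Measure.map φ μ = ν := by
    intro μ ν h
    have h2 := congrArg (Measure.map g') h
    rw [Measure.map_map hg'.continuous.measurable hfC.continuous.measurable,
      Measure.map_map hg'.continuous.measurable hf'.continuous.measurable,
      hinv₁.comp_eq_id, Measure.map_id] at h2
    exact h2
  have cj : ∀ (r : Fin d → (Fin d → ℝ) → ℝ), IsCondFamily pa r → Continuous (jointDensity r) :=
    fun r hr => continuous_finsetProd _ fun i _ => (hr i).2.1.continuous
  have pj : ∀ (r : Fin d → (Fin d → ℝ) → ℝ), IsCondFamily pa r → ∀ z, 0 < jointDensity r z :=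
    fun r hr z => Finset.prod_pos fun i _ => (hr i).1 z
  have split : ∀ (r : Fin d → (Fin d → ℝ) → ℝ), IsCondFamily pa r → ∀ k (x : ℝ) z,
      (x * ∏ i ∈ ({k} : Finset (Fin d))ᶜ, r i z) / jointDensity r z = x / r k z := by
    intro r hr k x z
    have h0 : 0 < ∏ i ∈ ({k} : Finset (Fin d))ᶜ, r i z :=
      Finset.prod_pos fun i _ => (hr i).1 z
    unfold jointDensity
    rw [Fintype.prod_eq_mul_prod_compl k, mul_div_mul_right _ _ h0.ne']
  have ratio : ∀ k z, pt k z / p k z = qt k (φ z) / q k (φ z) := by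
    intro k z
    have := ratio_aux φ ψ hφ.continuous hψ.continuous hψφ (jointDensity p)
      (fun z => pt k z * ∏ i ∈ ({k} : Finset (Fin d))ᶜ, p i z) (jointDensity q)
      (fun z => qt k z * ∏ i ∈ ({k} : Finset (Fin d))ᶜ, q i z)
      (cj p hp)
      ((hpt k).2.1.continuous.mul (continuous_finsetProd _ fun i _ => (hp i).2.1.continuous))
      (cj q hq)
      ((hqt k).2.1.continuous.mul (continuous_finsetProd _ fun i _ => (hq i).2.1.continuous))
      (pj p hp)
      (fun z => mul_pos ((hpt k).1 z) (Finset.prod_pos fun i _ => (hp i).1 z))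
      (pj q hq)
      (fun z => mul_pos ((hqt k).1 z) (Finset.prod_pos fun i _ => (hq i).1 z))
      (push _ _ hmatch0) (push _ _ (hmatch k)) z
    rwa [split p hp, split q hq] at this
  let A : Fin d → (Fin d → ℝ) → ℝ := fun k w => Real.log (p k w) - Real.log (pt k w)
  let B : Fin d → (Fin d → ℝ) → ℝ := fun k w => Real.log (q k w) - Real.log (qt k w)
  have hA : ∀ k, ContDiff ℝ 1 (A k) := fun k =>
    ((hp k).2.1.log fun z => ((hp k).1 z).ne').sub ((hpt k).2.1.log fun z => ((hpt k).1 z).ne')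
  have hB : ∀ k, ContDiff ℝ 1 (B k) := fun k =>
    ((hq k).2.1.log fun z => ((hq k).1 z).ne').sub ((hqt k).2.1.log fun z => ((hqt k).1 z).ne')
  have hAd : ∀ k, DependsOnlyOn (A k) (insert k (pa k)) := by
    intro k z w h
    simp only [A]
    rw [(hp k).2.2.1 z w h, (hpt k).2.2.1 z w fun i hi =>
      h i (Finset.insert_subset_insert k (hpak k) hi)]
  have hBd : ∀ k, DependsOnlyOn (B k) (insert k (pa k)) := by
    intro k z w h
    simp only [B]
    rw [(hq k).2.2.1 z w h, (hqt k).2.2.1 z w fun i hi =>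
      h i (Finset.insert_subset_insert k (hpak k) hi)]
  have hAB : ∀ k, A k = B k ∘ φ := by
    intro k
    funext z
    have h := congrArg Real.log (ratio k z)
    rw [Real.log_div ((hpt k).1 z).ne' ((hp k).1 z).ne',
      Real.log_div ((hqt k).1 _).ne' ((hq k).1 _).ne'] at h
    simp only [A, B, Function.comp]
    linarith
  have dφ : Differentiable ℝ φ := hφ.differentiable one_ne_zero
  have dφi : ∀ i z v, fderiv ℝ (fun w => φ w i) z v = fderiv ℝ φ z v i := by
    intro i z v
    rw [fderiv_apply (dφ z)]
    rfl
  intro i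
  induction i using WellFoundedLT.induction with
  | ind k ih =>
  intro j hj z
  have hjk : j ∉ insert k (pa k) := by
    intro h
    rcases Finset.mem_insert.1 h with h | h
    · exact hj (Or.inr h)
    · exact hj (Or.inl (Relation.TransGen.single h))
  have main : ∀ w, fderiv ℝ (B k) (φ w) (Pi.single k 1) *
      fderiv ℝ φ w (Pi.single j 1) k = 0 := by
    intro w
    have h0 := fderiv_zero_of_dependsOnlyOn (A k) _ (hAd k)
      ((hA k).differentiable one_ne_zero) j hjk w
    rw [hAB k, fderiv_comp w ((hB k).differentiable one_ne_zero _) (dφ w)] at h0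
    simp only [ContinuousLinearMap.comp_apply] at h0
    set v := fderiv ℝ φ w (Pi.single j 1) with hv
    rw [← Finset.univ_sum_single v, map_sum, Finset.sum_eq_single k] at h0
    · have : (Pi.single k (v k) : Fin d → ℝ) = v k • Pi.single k 1 := by
        rw [← Pi.single_smul]; simp
      rw [this, map_smul, smul_eq_mul] at h0
      rw [mul_comm]; exact h0
    · intro l _ hlk
      have : (Pi.single l (v l) : Fin d → ℝ) = v l • Pi.single l 1 := by
        rw [← Pi.single_smul]; simp
      rw [this, map_smul, smul_eq_mul]
      by_cases hl : l ∈ pa k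
      · have : v l = 0 := by
          rw [hv, ← dφi]
          refine ih l (hpa k l hl) j ?_ w
          rintro (h | h)
          · exact hj (Or.inl (Relation.TransGen.tail h hl))
          · exact hj (Or.inl (Relation.TransGen.single (h ▸ hl)))
        rw [this, zero_mul]
      · rw [fderiv_zero_of_dependsOnlyOn (B k) _ (hBd k)
          ((hB k).differentiable one_ne_zero) l (by simp [hlk, hl]), mul_zero]
    · simp
  have hdense : Dense {y | fderiv ℝ (B k) y (Pi.single k 1) ≠ 0} :=
    Measure.dense_of_ae (hdiscq k)
  have hdense2 : Dense (ψ '' {y | fderiv ℝ (B k) y (Pi.single k 1) ≠ 0}) :=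
    hψφ.surjective.denseRange.dense_image hψ.continuous hdense
  have hc : Continuous fun w => fderiv ℝ φ w (Pi.single j 1) k :=
    (continuous_apply k).comp ((hφ.continuous_fderiv one_ne_zero).clm_apply continuous_const)
  have hz : (fun w => fderiv ℝ φ w (Pi.single j 1) k) = fun _ => 0 := by
    refine hc.ext_on hdense2 continuous_const ?_
    rintro _ ⟨y, hy, rfl⟩
    have := main (ψ y)
    rw [hφψ y] at this
    exact (mul_eq_zero.1 this).resolve_left hy
  change fderiv ℝ (fun w => φ w k) z (Pi.single j 1) = 0
  rw [dφi]
  exact congrFun hz z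
end
end

section
/- Let G be a DAG on [d]. Let (p_i) and (q_i) be C¹ conditional-density families for G, and for each k ∈ [d] let p̃_k and q̃_k be perfect intervened densities on node k (strictly positive C¹ probability densities on ℝ, depending on z_k only), giving interventional joint densities p^k(z) = p̃_k(z_k)∏_{i≠k}p_i(z_i ∣ z_{pa(i)}) and likewise q^k; let p^0, q^0 be the unintervened joint densities. Assume the interventional discrepancy holds for every node k ∈ [d] in both families. Let f, f′ : ℝ^d → ℝ^d be C¹ diffeomorphisms such that f_*P^k = f′_*Q^k for every k ∈ {0,1,…,d}. Then φ := f′⁻¹ ∘ f ∈ S_scaling: there exist C¹ diffeomorphisms h_1,…,h_d : ℝ → ℝ with φ(z) = (h_1(z_1),…,h_d(z_d)) for all z ∈ ℝ^d. -/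
open MeasureTheory

noncomputable section

/-- Triangular maps: the `k`-th output depends only on inputs up to `k`. -/
def TriMap {d : ℕ} (φ : (Fin d → ℝ) → (Fin d → ℝ)) : Prop :=
  ∀ (k : Fin d) (z w : Fin d → ℝ), (∀ i ≤ k, z i = w i) → φ z k = φ w k

lemma fderiv_single_eq_zero {d : ℕ} (F : (Fin d → ℝ) → ℝ) (z : Fin d → ℝ) (l : Fin d)
    (hF : DifferentiableAt ℝ F z) (h : ∀ t : ℝ, F (z + t • Pi.single l 1) = F z) :
    fderiv ℝ F z (Pi.single l 1) = 0 := by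
  have h1 := hF.hasFDerivAt.hasLineDerivAt (Pi.single l 1)
  unfold HasLineDerivAt at h1
  simp only [h] at h1
  exact h1.unique (hasDerivAt_const _ _)

lemma clm_apply_sum {d : ℕ} {E : Type*} [NormedAddCommGroup E] [NormedSpace ℝ E]
    (L : (Fin d → ℝ) →L[ℝ] E) (v : Fin d → ℝ) :
    L v = ∑ m, v m • L (Pi.single m 1) := by
  conv_lhs => rw [pi_eq_sum_univ' v]
  simp only [map_sum, map_smul]

lemma tri_of_fderiv {d : ℕ} (φ : (Fin d → ℝ) → (Fin d → ℝ)) (hφ : ContDiff ℝ 1 φ)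
    (h : ∀ k l : Fin d, k < l → ∀ z, fderiv ℝ φ z (Pi.single l 1) k = 0) : TriMap φ := by
  intro k z w hzw
  have hd : Differentiable ℝ φ := hφ.differentiable (by norm_num)
  have key : ∀ t : ℝ, HasDerivAt (fun t : ℝ => φ (z + t • (w - z)) k) 0 t := by
    intro t
    have h1 : HasDerivAt (fun t : ℝ => z + t • (w - z)) (w - z) t := by
      simpa using ((hasDerivAt_id t).smul_const (w - z)).const_add z
    have h2 := (hd (z + t • (w - z))).hasFDerivAt.comp_hasDerivAt t h1
    have h3 := (hasDerivAt_pi.1 h2) k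
    have h4 : fderiv ℝ φ (z + t • (w - z)) (w - z) k = 0 := by
      rw [clm_apply_sum, Finset.sum_apply]
      refine Finset.sum_eq_zero fun m _ => ?_
      rcases le_or_gt m k with hm | hm
      · simp [hzw m hm]
      · simp [h k m hm]
    rw [h4] at h3
    exact h3
  have := is_const_of_deriv_eq_zero (fun t => (key t).differentiableAt) (fun t => (key t).deriv) 0 1
  simpa using this

lemma tri_step {d : ℕ} (pa : Fin d → Finset (Fin d))
    (hpa : ∀ i : Fin d, ∀ j ∈ pa i, j < i)
    (p q : Fin d → (Fin d → ℝ) → ℝ)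
    (hp : IsCondFamily pa p) (hq : IsCondFamily pa q)
    (pt qt : Fin d → ℝ → ℝ)
    (hpt : ∀ k, IsC1Density (pt k)) (hqt : ∀ k, IsC1Density (qt k))
    (hdiscq : ∀ k : Fin d, ∀ᵐ (z : Fin d → ℝ) ∂volume,
        fderiv ℝ (fun w => Real.log (q k w)) z (Pi.single k 1) ≠
          deriv (fun t => Real.log (qt k t)) (z k))
    (φ ψ : (Fin d → ℝ) → (Fin d → ℝ)) (hφ : ContDiff ℝ 1 φ) (hψ : ContDiff ℝ 1 ψ)
    (h1 : Function.LeftInverse ψ φ) (h2 : Function.RightInverse ψ φ)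
    (hr : ∀ k z, p k z * qt k (φ z k) = q k (φ z) * pt k (z k)) : TriMap φ := by
  apply tri_of_fderiv φ hφ
  intro k
  have hd : Differentiable ℝ φ := hφ.differentiable (by norm_num)
  have hlp : ∀ k, Differentiable ℝ fun w => Real.log (p k w) - Real.log (pt k (w k)) := by
    intro k
    have a1 : Differentiable ℝ (p k) := (hp k).2.1.differentiable (by norm_num)
    have a2 : Differentiable ℝ (pt k) := (hpt k).2.1.differentiable (by norm_num)
    exact (a1.log fun z => ((hp k).1 z).ne').sub
      ((a2.comp (differentiable_apply k)).log fun z => ((hpt k).1 _).ne')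
  have hlq1 : ∀ k, Differentiable ℝ fun w => Real.log (q k w) := fun k =>
    ((hq k).2.1.differentiable (by norm_num)).log fun z => ((hq k).1 z).ne'
  have hlq2 : ∀ k, Differentiable ℝ fun t => Real.log (qt k t) := fun k =>
    ((hqt k).2.1.differentiable (by norm_num)).log fun z => ((hqt k).1 z).ne'
  have hlq : ∀ k, Differentiable ℝ fun w => Real.log (q k w) - Real.log (qt k (w k)) :=
    fun k => (hlq1 k).sub ((hlq2 k).comp (differentiable_apply k))
  have hcomp : ∀ k, (fun w => Real.log (p k w) - Real.log (pt k (w k))) =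
      (fun w => Real.log (q k w) - Real.log (qt k (w k))) ∘ φ := by
    intro k
    funext z
    have := congrArg Real.log (hr k z)
    rw [Real.log_mul ((hp k).1 z).ne' ((hqt k).1 _).ne',
      Real.log_mul ((hq k).1 _).ne' ((hpt k).1 _).ne'] at this
    simp only [Function.comp]
    linarith
  have hlt : ∀ k l : Fin d, k < l → ∀ i ∈ insert k (pa k), i ≠ l := by
    intro k l hkl i hi
    rcases Finset.mem_insert.1 hi with rfl | hi
    · exact hkl.ne
    · exact ((hpa k i hi).trans hkl).ne
  have hzero : ∀ (r : Fin d → (Fin d → ℝ) → ℝ) (rt : Fin d → ℝ → ℝ), IsCondFamily pa r →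
      (∀ k, Differentiable ℝ fun w => Real.log (r k w) - Real.log (rt k (w k))) →
      ∀ k l, k < l → ∀ z, fderiv ℝ (fun w => Real.log (r k w) - Real.log (rt k (w k))) z
        (Pi.single l 1) = 0 := by
    intro r rt hr' hrd k l hkl z
    apply fderiv_single_eq_zero _ _ _ (hrd k z)
    intro t
    have e1 : r k (z + t • Pi.single l 1) = r k z :=
      (hr' k).2.2.1 _ _ fun i hi => by simp [hlt k l hkl i hi]
    rw [e1]
    simp [hkl.ne]
  induction k using WellFoundedLT.induction with
  | ind k ih =>
  intro l hkl
  have hmul : ∀ z, fderiv ℝ φ z (Pi.single l 1) k *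
      fderiv ℝ (fun w => Real.log (q k w) - Real.log (qt k (w k))) (φ z) (Pi.single k 1) = 0 := by
    intro z
    have e := hzero p pt hp hlp k l hkl z
    rw [hcomp k, fderiv_comp z (hlq k _) (hd z), ContinuousLinearMap.comp_apply,
      clm_apply_sum, Finset.sum_eq_single k] at e
    · exact e
    · intro m _ hm
      rcases lt_or_gt_of_ne hm with h | h
      · rw [ih m h l (h.trans hkl) z, zero_smul]
      · rw [hzero q qt hq hlq k m h, smul_zero]
    · simp
  have hdense := (Measure.dense_of_ae (hdiscq k))
  have hdense2 := (h1.surjective.denseRange).dense_image hψ.continuous hdense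
  have hcl : IsClosed {z | fderiv ℝ φ z (Pi.single l 1) k = 0} := by
    apply isClosed_eq _ continuous_const
    have := hφ.continuous_fderiv (by norm_num)
    exact (continuous_apply k).comp (this.clm_apply continuous_const)
  have hsub : ψ '' {z | fderiv ℝ (fun w => Real.log (q k w)) z (Pi.single k 1) ≠
          deriv (fun t => Real.log (qt k t)) (z k)} ⊆
      {z | fderiv ℝ φ z (Pi.single l 1) k = 0} := by
    rintro _ ⟨w, hw, rfl⟩
    have := hmul (ψ w)
    rw [h2 w] at this
    rcases mul_eq_zero.1 this with h | h
    · exact h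
    · exfalso
      apply hw
      have b1 : HasFDerivAt (fun w : Fin d → ℝ => Real.log (qt k (w k))) _ w :=
        HasFDerivAt.comp (g := fun t => Real.log (qt k t)) (f := fun w : Fin d → ℝ => w k) w
          ((hlq2 k (w k)).hasDerivAt.hasFDerivAt)
          (ContinuousLinearMap.proj (R := ℝ) (φ := fun _ : Fin d => ℝ) k).hasFDerivAt
      have b2 := ((hlq1 k w).hasFDerivAt.sub b1).fderiv
      have b3 : fderiv ℝ (fun w => Real.log (q k w) - Real.log (qt k (w k))) w = _ := b2
      rw [b3] at h
      simp at h
      linarith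
  intro z
  exact (hcl.closure_subset_iff.2 hsub) (hdense2 z)

lemma cdf_mono (a b h1 h2 h1' h2' : ℝ → ℝ) (hb : ∀ x, 0 < b x)
    (hbi : Integrable b)
    (d1 : ∀ t, HasDerivAt h1 (h1' t) t) (d2 : ∀ t, HasDerivAt h2 (h2' t) t)
    (s1 : Function.Surjective h1) (s2 : Function.Surjective h2)
    (p1 : ∀ t, 0 < h1' t) (p2 : ∀ t, 0 < h2' t)
    (e1 : ∀ t, a t = b (h1 t) * |h1' t|) (e2 : ∀ t, a t = b (h2 t) * |h2' t|) :
    h1 = h2 := by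
  have key : ∀ h h' : ℝ → ℝ, (∀ t, HasDerivAt h (h' t) t) → Function.Surjective h →
      (∀ t, 0 < h' t) → (∀ t, a t = b (h t) * |h' t|) → ∀ t,
      ∫ x in Set.Iic (h t), b x = ∫ x in Set.Iic t, a x := by
    intro h h' dh sh ph eh t
    have hm : StrictMono h := strictMono_of_deriv_pos (fun t => by rw [(dh t).deriv]; exact ph t)
    have im : h '' Set.Iic t = Set.Iic (h t) := by
      ext y
      constructor
      · rintro ⟨x, hx, rfl⟩
        exact hm.monotone hx
      · intro hy
        obtain ⟨x, rfl⟩ := sh y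
        exact ⟨x, hm.le_iff_le.1 hy, rfl⟩
    rw [← im, integral_image_eq_integral_abs_deriv_smul measurableSet_Iic
      (fun x _ => (dh x).hasDerivWithinAt) hm.injective.injOn]
    refine integral_congr_ae (Filter.Eventually.of_forall fun x => ?_)
    simp [eh x, mul_comm]
  have strict : ∀ x y, x < y → ∫ x in Set.Iic x, b x < ∫ x in Set.Iic y, b x := by
    intro x y hxy
    have := intervalIntegral.integral_Iic_sub_Iic (a := x) (b := y) hbi.integrableOn hbi.integrableOn
    have h3 := intervalIntegral.intervalIntegral_pos_of_pos (a := x) (b := y)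
      hbi.intervalIntegrable hb hxy
    linarith
  funext t
  have e := (key h1 h1' d1 s1 p1 e1 t).trans (key h2 h2' d2 s2 p2 e2 t).symm
  rcases lt_trichotomy (h1 t) (h2 t) with h | h | h
  · exact absurd e (strict _ _ h).ne
  · exact h
  · exact absurd e (strict _ _ h).ne'

lemma cdf_anti (a b h1 h2 h1' h2' : ℝ → ℝ) (hb : ∀ x, 0 < b x)
    (hbi : Integrable b)
    (d1 : ∀ t, HasDerivAt h1 (h1' t) t) (d2 : ∀ t, HasDerivAt h2 (h2' t) t)
    (s1 : Function.Surjective h1) (s2 : Function.Surjective h2)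
    (p1 : ∀ t, h1' t < 0) (p2 : ∀ t, h2' t < 0)
    (e1 : ∀ t, a t = b (h1 t) * |h1' t|) (e2 : ∀ t, a t = b (h2 t) * |h2' t|) :
    h1 = h2 := by
  have := cdf_mono a (fun x => b (-x)) (-h1) (-h2) (-h1') (-h2') (fun x => hb _)
    hbi.comp_neg (fun t => (d1 t).neg) (fun t => (d2 t).neg)
    (fun y => by obtain ⟨x, hx⟩ := s1 (-y); exact ⟨x, by simp [hx]⟩)
    (fun y => by obtain ⟨x, hx⟩ := s2 (-y); exact ⟨x, by simp [hx]⟩)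
    (fun t => by simpa using p1 t) (fun t => by simpa using p2 t)
    (fun t => by simpa using e1 t) (fun t => by simpa using e2 t)
  exact neg_injective this

lemma density_change {d : ℕ} (ρ σ : (Fin d → ℝ) → ℝ) (hρ : Continuous ρ) (hσ : Continuous σ)
    (hρ0 : ∀ z, 0 < ρ z) (hσ0 : ∀ z, 0 < σ z)
    (φ ψ : (Fin d → ℝ) → (Fin d → ℝ)) (hφ : ContDiff ℝ 1 φ) (hψ : ContDiff ℝ 1 ψ)
    (h1 : Function.LeftInverse ψ φ) (h2 : Function.RightInverse ψ φ)
    (hm : Measure.map φ (densityMeasure ρ) = densityMeasure σ) (z : Fin d → ℝ) :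
    ρ z = σ (φ z) * |(fderiv ℝ φ z).det| := by
  have hd : Differentiable ℝ φ := hφ.differentiable (by norm_num)
  have hdet : Continuous fun z => |(fderiv ℝ φ z).det| := by
    have := hφ.continuous_fderiv (by norm_num)
    exact (ContinuousLinearMap.continuous_det.comp this).abs
  have hτ : Continuous fun z => σ (φ z) * |(fderiv ℝ φ z).det| :=
    (hσ.comp hφ.continuous).mul hdet
  have hE : densityMeasure ρ = densityMeasure fun z => σ (φ z) * |(fderiv ℝ φ z).det| := by
    ext s hs
    have him : φ '' s = ψ ⁻¹' s := congrFun (Set.image_eq_preimage_of_inverse h1 h2) s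
    have hms : MeasurableSet (φ '' s) := him ▸ hψ.continuous.measurable hs
    have e1 : densityMeasure ρ s = densityMeasure σ (φ '' s) := by
      rw [← hm, Measure.map_apply hφ.continuous.measurable hms,
        Set.preimage_image_eq _ h1.injective]
    rw [e1]
    unfold densityMeasure
    rw [withDensity_apply _ hms, withDensity_apply _ hs,
      lintegral_image_eq_lintegral_abs_det_fderiv_mul volume hs
        (fun x _ => (hd x).hasFDerivAt.hasFDerivWithinAt) h1.injective.injOn]
    refine lintegral_congr fun x => ?_
    rw [mul_comm, ENNReal.ofReal_mul (hσ0 _).le]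
  unfold densityMeasure at hE
  rw [withDensity_eq_iff_of_sigmaFinite (by fun_prop)
    (hτ.measurable.ennreal_ofReal.aemeasurable)] at hE
  have hE2 : ρ =ᵐ[volume] fun z => σ (φ z) * |(fderiv ℝ φ z).det| := by
    filter_upwards [hE] with x hx
    exact (ENNReal.ofReal_eq_ofReal_iff (hρ0 x).le
      (mul_nonneg (hσ0 _).le (abs_nonneg _))).1 hx
  exact congrFun ((Continuous.ae_eq_iff_eq volume hρ hτ).1 hE2) z

lemma core_step {d : ℕ} (pa : Fin d → Finset (Fin d))
    (hpa : ∀ i : Fin d, ∀ j ∈ pa i, j < i)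
    (p q : Fin d → (Fin d → ℝ) → ℝ)
    (hp : IsCondFamily pa p) (hq : IsCondFamily pa q)
    (pt qt : Fin d → ℝ → ℝ)
    (hpt : ∀ k, IsC1Density (pt k)) (hqt : ∀ k, IsC1Density (qt k))
    (φ ψ : (Fin d → ℝ) → (Fin d → ℝ)) (hφ : ContDiff ℝ 1 φ)
    (h1 : Function.LeftInverse ψ φ) (h2 : Function.RightInverse ψ φ)
    (hr : ∀ k z, p k z * qt k (φ z k) = q k (φ z) * pt k (z k))
    (h0 : ∀ z, ∏ i, p i z = (∏ i, q i (φ z)) * |(fderiv ℝ φ z).det|)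
    (tφ : TriMap φ) (tψ : TriMap ψ) (k : Fin d) (z w : Fin d → ℝ) (hzw : z k = w k) :
    φ z k = φ w k := by
  have hd : Differentiable ℝ φ := hφ.differentiable (by norm_num)
  set D : Fin d → (Fin d → ℝ) → ℝ := fun i z => fderiv ℝ φ z (Pi.single i 1) i with hD
  have hline : ∀ i j z, HasLineDerivAt ℝ (fun x => φ x i) (fderiv ℝ φ z (Pi.single j 1) i) z
      (Pi.single j 1) := by
    intro i j z
    have a := (hd z).hasFDerivAt.hasLineDerivAt (Pi.single j 1)
    exact (hasDerivAt_pi.1 a) i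
  have hoff : ∀ i j, i < j → ∀ z, fderiv ℝ φ z (Pi.single j 1) i = 0 := by
    intro i j hij z
    have a := hline i j z
    unfold HasLineDerivAt at a
    have b : ∀ t : ℝ, φ (z + t • Pi.single j 1) i = φ z i := fun t =>
      tφ i _ _ fun m hm => by simp [(hm.trans_lt hij).ne]
    simp only [b] at a
    exact a.unique (hasDerivAt_const _ _)
  have hDdep : ∀ i z w, (∀ j ≤ i, z j = w j) → D i z = D i w := by
    intro i z w hzw
    have a := hline i i z
    have b := hline i i w
    unfold HasLineDerivAt at a b
    have c : ∀ t : ℝ, φ (z + t • Pi.single i 1) i = φ (w + t • Pi.single i 1) i := fun t =>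
      tφ i _ _ fun m hm => by simp [hzw m hm]
    simp only [c] at a
    exact a.unique b
  have hdet : ∀ z, (fderiv ℝ φ z).det = ∏ i, D i z := by
    intro z
    rw [ContinuousLinearMap.det, ← LinearMap.det_toMatrix',
      Matrix.det_of_isLowerTriangular]
    · refine Finset.prod_congr rfl fun i _ => ?_
      simp [LinearMap.toMatrix'_apply, hD]
    · intro i j hij
      simp only [LinearMap.toMatrix'_apply]
      exact hoff i j hij z
  have hDne : ∀ i z, D i z ≠ 0 := by
    intro i z hi
    have a : 0 < ∏ i, p i z := Finset.prod_pos fun i _ => (hp i).1 z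
    rw [h0 z, hdet z, Finset.prod_eq_zero (f := fun i => D i z) (Finset.mem_univ i) hi] at a
    simp at a
  have hpos : ∀ i z, 0 < q i (φ z) * |D i z| := fun i z =>
    mul_pos ((hq i).1 _) (abs_pos.2 (hDne i z))
  have hle : ∀ i, ∀ j ∈ insert i (pa i), j ≤ i := by
    intro i j hj
    rcases Finset.mem_insert.1 hj with rfl | hj
    · exact le_rfl
    · exact (hpa i j hj).le
  have hcurve : ∀ i z t, HasDerivAt (fun t => φ (Function.update z i t) i)
      (D i (Function.update z i t)) t := by
    intro i z t
    have a := (hd (Function.update z i t)).hasFDerivAt.comp_hasDerivAt t (hasDerivAt_update z i t)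
    exact (hasDerivAt_pi.1 a) i
  have hupd : ∀ (z : Fin d → ℝ) i t, ∀ j < i, Function.update z i t j = z j :=
    fun z i t j hj => Function.update_of_ne hj.ne _ _
  have hinj : ∀ i z, Function.Injective (fun t => φ (Function.update z i t) i) := by
    intro i z s t hst
    have a : ψ (φ (Function.update z i s)) i = ψ (φ (Function.update z i t)) i := by
      apply tψ i
      intro j hj
      rcases hj.lt_or_eq with hj | rfl
      · apply tφ j
        intro m hm
        rw [hupd z i s m (hm.trans_lt hj), hupd z i t m (hm.trans_lt hj)]
      · exact hst
    rw [h1, h1] at a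
    simpa using a
  have hsurj : ∀ i z, Function.Surjective (fun t => φ (Function.update z i t) i) := by
    intro i z s
    refine ⟨ψ (Function.update (φ z) i s) i, ?_⟩
    have a : φ (Function.update z i (ψ (Function.update (φ z) i s) i)) i =
        φ (ψ (Function.update (φ z) i s)) i := by
      apply tφ i
      intro j hj
      rcases hj.lt_or_eq with hj | rfl
      · rw [hupd _ _ _ j hj]
        have b : ψ (Function.update (φ z) i s) j = ψ (φ z) j := by
          apply tψ j
          intro m hm
          rw [hupd _ _ _ m (hm.trans_lt hj)]
        rw [b, h1]
      · simp
    simp only [a, h2 _, Function.update_self]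
  have hint : ∀ i z, ∫ t, q i (φ (Function.update z i t)) * |D i (Function.update z i t)| = 1 := by
    intro i z
    have a := integral_image_eq_integral_abs_deriv_smul (s := Set.univ) MeasurableSet.univ
      (fun t _ => (hcurve i z t).hasDerivWithinAt) (hinj i z).injOn
      (fun s => q i (Function.update (φ z) i s))
    rw [Set.image_univ, (hsurj i z).range_eq, setIntegral_univ, setIntegral_univ,
      (hq i).2.2.2] at a
    rw [a]
    refine integral_congr_ae (Filter.Eventually.of_forall fun t => ?_)
    have b : q i (φ (Function.update z i t)) =
        q i (Function.update (φ z) i (φ (Function.update z i t) i)) := by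
      apply (hq i).2.2.1
      intro j hj
      rcases (hle i j hj).lt_or_eq with hj | rfl
      · rw [hupd _ _ _ j hj]
        apply tφ j
        intro m hm
        rw [hupd _ _ _ m (hm.trans_lt hj)]
      · simp
    simp only [smul_eq_mul]
    rw [← b, mul_comm]
  have hu : ∀ i z, p i z = q i (φ z) * |D i z| := by
    intro i
    induction i using WellFoundedGT.induction with
    | ind i ih =>
    intro z
    have hprod : ∀ z, ∏ j, p j z / (q j (φ z) * |D j z|) = 1 := by
      intro z
      rw [Finset.prod_div_distrib, Finset.prod_mul_distrib, h0 z, hdet z, Finset.abs_prod]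
      apply div_self
      rw [← Finset.prod_mul_distrib]
      exact (Finset.prod_pos fun j _ => hpos j z).ne'
    set C := ∏ j ∈ Finset.Iio i, p j z / (q j (φ z) * |D j z|) with hC
    have hline2 : ∀ t, p i (Function.update z i t) * C =
        q i (φ (Function.update z i t)) * |D i (Function.update z i t)| := by
      intro t
      have a := hprod (Function.update z i t)
      rw [← Finset.prod_subset (Finset.subset_univ (Finset.Iic i)), ← Finset.Iio_insert,
        Finset.prod_insert (by simp)] at a
      · have b : ∏ j ∈ Finset.Iio i, p j (Function.update z i t) /
            (q j (φ (Function.update z i t)) * |D j (Function.update z i t)|) = C := by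
          refine Finset.prod_congr rfl fun j hj => ?_
          rw [Finset.mem_Iio] at hj
          have c : ∀ m ≤ j, Function.update z i t m = z m := fun m hm =>
            hupd z i t m (hm.trans_lt hj)
          rw [hDdep j _ _ c, (hp j).2.2.1 _ _ fun m hm => c m (hle j m hm),
            (hq j).2.2.1 _ (φ z) fun m hm =>
              tφ m _ _ fun n hn => c n (hn.trans (hle j m hm))]
        rw [b] at a
        have e := (hpos i (Function.update z i t)).ne'
        rw [div_mul_eq_mul_div, div_eq_one_iff_eq e] at a
        exact a
      · intro j _ hj
        rw [Finset.mem_Iic, not_le] at hj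
        rw [ih j hj]
        exact div_self (hpos j _).ne'
    have hC1 : C = 1 := by
      have a := hint i z
      simp only [← hline2] at a
      rw [integral_mul_const, (hp i).2.2.2, one_mul] at a
      exact a
    have a := hline2 (z i)
    rw [hC1, mul_one, Function.update_eq_self] at a
    exact a
  have hdens : ∀ z, pt k (z k) = qt k (φ z k) * |D k z| := by
    intro z
    have a := hr k z
    rw [hu k z] at a
    have b := ((hq k).1 (φ z)).ne'
    apply mul_left_cancel₀ b
    linarith
  have hDc : Continuous (D k) := by
    have := hφ.continuous_fderiv (by norm_num)
    exact (continuous_apply k).comp (this.clm_apply continuous_const)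
  have hsign : (∀ z, 0 < D k z) ∨ (∀ z, D k z < 0) := by
    by_contra! hcon
    obtain ⟨⟨x, hx⟩, ⟨y, hy⟩⟩ := hcon
    obtain ⟨c, hc⟩ := mem_range_of_exists_le_of_exists_ge hDc ⟨x, hx⟩ ⟨y, hy⟩
    exact hDne k c hc
  have e : ∀ z t, pt k t = qt k (φ (Function.update z k t) k) * |D k (Function.update z k t)| := by
    intro z t
    simpa using hdens (Function.update z k t)
  have hqi : Integrable (qt k) := integrable_of_integral_eq_one (hqt k).2.2
  have fin : (fun t => φ (Function.update z k t) k) = (fun t => φ (Function.update w k t) k) := by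
    rcases hsign with hs | hs
    · exact cdf_mono (pt k) (qt k) _ _ _ _ (hqt k).1 hqi (hcurve k z) (hcurve k w)
        (hsurj k z) (hsurj k w) (fun t => hs _) (fun t => hs _) (e z) (e w)
    · exact cdf_anti (pt k) (qt k) _ _ _ _ (hqt k).1 hqi (hcurve k z) (hcurve k w)
        (hsurj k z) (hsurj k w) (fun t => hs _) (fun t => hs _) (e z) (e w)
  have a := congrFun fin (z k)
  simp only [Function.update_eq_self] at a
  rw [hzw, Function.update_eq_self] at a
  exact a

lemma ratio_eq {d : ℕ} (pa : Fin d → Finset (Fin d))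
    (p q : Fin d → (Fin d → ℝ) → ℝ)
    (hp : IsCondFamily pa p) (hq : IsCondFamily pa q)
    (pt qt : Fin d → ℝ → ℝ)
    (hpt : ∀ k, IsC1Density (pt k)) (hqt : ∀ k, IsC1Density (qt k))
    (φ ψ : (Fin d → ℝ) → (Fin d → ℝ)) (hφ : ContDiff ℝ 1 φ) (hψ : ContDiff ℝ 1 ψ)
    (h1 : Function.LeftInverse ψ φ) (h2 : Function.RightInverse ψ φ)
    (hm0 : Measure.map φ (densityMeasure (jointDensity p)) = densityMeasure (jointDensity q))
    (hm : ∀ k : Fin d,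
        Measure.map φ (densityMeasure fun z =>
            pt k (z k) * ∏ i ∈ ({k} : Finset (Fin d))ᶜ, p i z) =
        densityMeasure fun z =>
            qt k (z k) * ∏ i ∈ ({k} : Finset (Fin d))ᶜ, q i z) :
    (∀ z, ∏ i, p i z = (∏ i, q i (φ z)) * |(fderiv ℝ φ z).det|) ∧
    (∀ k z, p k z * qt k (φ z k) = q k (φ z) * pt k (z k)) := by
  have cp : ∀ i, Continuous (p i) := fun i => (hp i).2.1.continuous
  have cq : ∀ i, Continuous (q i) := fun i => (hq i).2.1.continuous
  have cpt : ∀ i, Continuous (pt i) := fun i => (hpt i).2.1.continuous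
  have cqt : ∀ i, Continuous (qt i) := fun i => (hqt i).2.1.continuous
  have H0 : ∀ z, ∏ i, p i z = (∏ i, q i (φ z)) * |(fderiv ℝ φ z).det| :=
    density_change (jointDensity p) (jointDensity q)
      (continuous_finsetProd _ fun i _ => cp i) (continuous_finsetProd _ fun i _ => cq i)
      (fun z => Finset.prod_pos fun i _ => (hp i).1 z)
      (fun z => Finset.prod_pos fun i _ => (hq i).1 z) φ ψ hφ hψ h1 h2 hm0
  refine ⟨H0, fun k z => ?_⟩
  have Hk := density_change _ _
      (((cpt k).comp (continuous_apply k)).mul (continuous_finsetProd _ fun i _ => cp i))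
      (((cqt k).comp (continuous_apply k)).mul (continuous_finsetProd _ fun i _ => cq i))
      (fun z => mul_pos ((hpt k).1 _) (Finset.prod_pos fun i _ => (hp i).1 z))
      (fun z => mul_pos ((hqt k).1 _) (Finset.prod_pos fun i _ => (hq i).1 z))
      φ ψ hφ hψ h1 h2 (hm k) z
  simp only [Pi.mul_apply, Function.comp] at Hk
  have H0z := H0 z
  rw [Fintype.prod_eq_mul_prod_compl k, Fintype.prod_eq_mul_prod_compl k] at H0z
  have A : 0 < ∏ i ∈ ({k} : Finset (Fin d))ᶜ, p i z := Finset.prod_pos fun i _ => (hp i).1 z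
  have B : 0 < ∏ i ∈ ({k} : Finset (Fin d))ᶜ, q i (φ z) :=
    Finset.prod_pos fun i _ => (hq i).1 _
  set a := ∏ i ∈ ({k} : Finset (Fin d))ᶜ, p i z
  set b := ∏ i ∈ ({k} : Finset (Fin d))ᶜ, q i (φ z)
  apply mul_right_cancel₀ A.ne'
  linear_combination (qt k (φ z k)) * H0z - (q k (φ z)) * Hk

/-- **Theorem 1 (ii).** CauCA with one perfect stochastic single-node intervention per node,
satisfying interventional discrepancy in both models: if the two models generate the same
pushforward distributions in the unintervened regime and in every interventional regime,
then `φ := f′⁻¹ ∘ f ∈ S_scaling`. -/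
theorem cauca_perfect_interventions_identifiability_scaling {d : ℕ}
    (pa : Fin d → Finset (Fin d))
    (hpa : ∀ i : Fin d, ∀ j ∈ pa i, j < i)
    (p q : Fin d → (Fin d → ℝ) → ℝ)
    (hp : IsCondFamily pa p) (hq : IsCondFamily pa q)
    (pt qt : Fin d → ℝ → ℝ)
    (hpt : ∀ k, IsC1Density (pt k)) (hqt : ∀ k, IsC1Density (qt k))
    (hdiscp : ∀ k : Fin d, ∀ᵐ (z : Fin d → ℝ) ∂volume,
        fderiv ℝ (fun w => Real.log (p k w)) z (Pi.single k 1) ≠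
          deriv (fun t => Real.log (pt k t)) (z k))
    (hdiscq : ∀ k : Fin d, ∀ᵐ (z : Fin d → ℝ) ∂volume,
        fderiv ℝ (fun w => Real.log (q k w)) z (Pi.single k 1) ≠
          deriv (fun t => Real.log (qt k t)) (z k))
    (f f' g' : (Fin d → ℝ) → (Fin d → ℝ))
    (hf : IsC1Diffeo f) (hf' : ContDiff ℝ 1 f') (hg' : ContDiff ℝ 1 g')
    (hinv₁ : Function.LeftInverse g' f') (hinv₂ : Function.RightInverse g' f')
    (hmatch0 : Measure.map f (densityMeasure (jointDensity p)) =
        Measure.map f' (densityMeasure (jointDensity q)))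
    (hmatch : ∀ k : Fin d,
        Measure.map f (densityMeasure fun z =>
            pt k (z k) * ∏ i ∈ ({k} : Finset (Fin d))ᶜ, p i z) =
        Measure.map f' (densityMeasure fun z =>
            qt k (z k) * ∏ i ∈ ({k} : Finset (Fin d))ᶜ, q i z)) :
    InSScaling (g' ∘ f) := by
  obtain ⟨cf, g, cg, hg1, hg2⟩ := hf
  have L : Function.LeftInverse (g ∘ f') (g' ∘ f) := fun z => by
    simp only [Function.comp]; rw [hinv₂, hg1]
  have R : Function.RightInverse (g ∘ f') (g' ∘ f) := fun z => by
    simp only [Function.comp]; rw [hg2, hinv₁]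
  have cφ : ContDiff ℝ 1 (g' ∘ f) := hg'.comp cf
  have cψ : ContDiff ℝ 1 (g ∘ f') := cg.comp hf'
  have push : ∀ μ ν : Measure (Fin d → ℝ), Measure.map f μ = Measure.map f' ν →
      Measure.map (g' ∘ f) μ = ν := by
    intro μ ν h
    rw [← Measure.map_map hg'.continuous.measurable cf.continuous.measurable, h,
      Measure.map_map hg'.continuous.measurable hf'.continuous.measurable, hinv₁.comp_eq_id,
      Measure.map_id]
  have push' : ∀ μ ν : Measure (Fin d → ℝ), Measure.map f μ = Measure.map f' ν →
      Measure.map (g ∘ f') ν = μ := by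
    intro μ ν h
    rw [← Measure.map_map cg.continuous.measurable hf'.continuous.measurable, ← h,
      Measure.map_map cg.continuous.measurable cf.continuous.measurable, hg1.comp_eq_id,
      Measure.map_id]
  obtain ⟨A0, A1⟩ := ratio_eq pa p q hp hq pt qt hpt hqt _ _ cφ cψ L R
    (push _ _ hmatch0) (fun k => push _ _ (hmatch k))
  obtain ⟨B0, B1⟩ := ratio_eq pa q p hq hp qt pt hqt hpt _ _ cψ cφ R L
    (push' _ _ hmatch0) (fun k => push' _ _ (hmatch k))
  have T1 := tri_step pa hpa p q hp hq pt qt hpt hqt hdiscq _ _ cφ cψ L R A1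
  have T2 := tri_step pa hpa q p hq hp qt pt hqt hpt hdiscp _ _ cψ cφ R L B1
  have F1 := core_step pa hpa p q hp hq pt qt hpt hqt _ _ cφ L R A1 A0 T1 T2
  have F2 := core_step pa hpa q p hq hp qt pt hqt hpt _ _ cψ R L B1 B0 T2 T1
  generalize g' ∘ f = φ at *
  generalize g ∘ f' = ψ at *
  have cu : ∀ k : Fin d, ContDiff ℝ 1 (fun t : ℝ => Function.update (0 : Fin d → ℝ) k t) :=
    fun k => contDiff_update (𝕜 := ℝ) (F' := fun _ : Fin d => ℝ) 1 0 k
  refine ⟨fun k t => φ (Function.update 0 k t) k, fun k => ⟨?_, ?_⟩, fun z k => F1 k _ _ (by simp)⟩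
  · exact contDiff_pi.1 (cφ.comp (cu k)) k
  · refine ⟨fun t => ψ (Function.update 0 k t) k, contDiff_pi.1 (cψ.comp (cu k)) k, ?_, ?_⟩
    · intro t
      have := F2 k (Function.update 0 k (φ (Function.update 0 k t) k))
        (φ (Function.update 0 k t)) (by simp)
      simp only [this, L _, Function.update_self]
    · intro t
      have := F1 k (Function.update 0 k (ψ (Function.update 0 k t) k))
        (ψ (Function.update 0 k t)) (by simp)
      simp only [this, R _, Function.update_self]
end
end

section
/- Let G be a DAG on [d], let (p_i), (q_i) be C¹ conditional-density families for G, and for each k ∈ [d] let p̃_k, q̃_k be perfect intervened densities on node k (strictly positive C¹ probability densities on ℝ), satisfying the interventional discrepancy in both families; let f, f′ be C¹ diffeomorphisms of ℝ^d with f_*P^k = f′_*Q^k for all k ∈ {0,…,d}, so that φ := f′⁻¹∘f = (h_1(z_1),…,h_d(z_d)) for C¹ diffeomorphisms h_k of ℝ. Let F_k and G_k be the cumulative distribution functions of the intervened densities p̃_k and q̃_k, and Ḡ_k := 1 − G_k. Then for every k ∈ [d], h_k = G_k⁻¹ ∘ F_k or h_k = Ḡ_k⁻¹ ∘ F_k.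 In particular, if p̃_k = q̃_k for all k, then each h_k is either the identity or the order-reversing map F_k⁻¹ ∘ (1 − F_k). -/
open MeasureTheory

noncomputable section

/-- The cumulative distribution function of a density `r` on `ℝ`. -/
def cdfOfDensity (r : ℝ → ℝ) : ℝ → ℝ := fun x => ∫ t in Set.Iic x, r t

/-- Integrating a product of conditional factors, from the last coordinate to the first. -/
theorem lmarginal_prod_cond {d : ℕ} (ρ : Fin d → (Fin d → ℝ) → ENNReal)
    (c : Fin d → ENNReal) (hm : ∀ i, Measurable (ρ i))
    (hdep : ∀ i z w, (∀ j ≤ i, z j = w j) → ρ i z = ρ i w)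
    (hc : ∀ i z, ∫⁻ t : ℝ, ρ i (Function.update z i t) = c i) (T : Finset (Fin d)) :
    ∀ z, lmarginal (fun _ => (volume : Measure ℝ)) T (fun w => ∏ i ∈ T, ρ i w) z
      = ∏ i ∈ T, c i := by
  induction T using Finset.induction_on_max with
  | empty => intro z; simp
  | insert a T hT ih =>
    intro z
    have ha : a ∉ T := fun h => lt_irrefl _ (hT a h)
    rw [lmarginal_insert' _ (Finset.measurable_prod _ fun i _ => hm i) ha]
    have : (fun x : Fin d → ℝ => ∫⁻ t : ℝ, ∏ i ∈ insert a T, ρ i (Function.update x a t))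
        = fun x => c a * ∏ i ∈ T, ρ i x := by
      funext x
      rw [← hc a x, ← lintegral_mul_const]
      · refine lintegral_congr fun t => ?_
        rw [Finset.prod_insert ha]
        congr 1
        refine Finset.prod_congr rfl fun i hi => hdep i _ _ fun j hj => ?_
        rw [Function.update_of_ne]
        exact (lt_of_le_of_lt hj (hT i hi)).ne
      · exact (hm a).comp (measurable_update x)
    rw [this, Finset.prod_insert ha, ← ih z]
    simp only [lmarginal]
    rw [lintegral_const_mul]
    exact (Finset.measurable_prod _ fun i _ => hm i).comp measurable_updateFinset

theorem lintegral_ofReal_eq_one {r : ℝ → ℝ} (h0 : ∀ x, 0 < r x) (h1 : (∫ x, r x) = 1) :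
    ∫⁻ x, ENNReal.ofReal (r x) = 1 := by
  have hi : Integrable r := by
    by_contra h
    rw [integral_undef h] at h1
    exact zero_ne_one h1
  rw [← ofReal_integral_eq_lintegral_ofReal hi (Filter.Eventually.of_forall fun x => (h0 x).le),
    h1, ENNReal.ofReal_one]

/-- The `k`-th marginal of the interventional measure is the intervened density. -/
theorem map_eval_interventional {d : ℕ} (pa : Fin d → Finset (Fin d))
    (hpa : ∀ i : Fin d, ∀ j ∈ pa i, j < i)
    (p : Fin d → (Fin d → ℝ) → ℝ) (hp : IsCondFamily pa p)
    (r : ℝ → ℝ) (hr : IsC1Density r) (k : Fin d) :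
    Measure.map (fun z : Fin d → ℝ => z k) (densityMeasure fun z =>
            r (z k) * ∏ i ∈ ({k} : Finset (Fin d))ᶜ, p i z) = densityMeasure₁ r := by
  have hrm : Measurable r := hr.2.1.continuous.measurable
  ext s hs
  rw [Measure.map_apply (measurable_pi_apply k) hs, densityMeasure, densityMeasure₁,
    withDensity_apply _ (measurable_pi_apply k hs), withDensity_apply _ hs,
    ← lintegral_indicator (measurable_pi_apply k hs), ← lintegral_indicator hs]
  set φ : ℝ → ENNReal := s.indicator fun x => ENNReal.ofReal (r x) with hφ
  have hφm : Measurable φ := hrm.ennreal_ofReal.indicator hs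
  let ρ : Fin d → (Fin d → ℝ) → ENNReal := fun i z =>
    if i = k then φ (z k) else ENNReal.ofReal (p i z)
  let c : Fin d → ENNReal := fun i => if i = k then ∫⁻ x, φ x else 1
  have key := lmarginal_prod_cond ρ c ?_ ?_ ?_ Finset.univ (fun _ => 0)
  · rw [lmarginal_univ, Finset.prod_eq_single k (by intro b _ hb; simp [c, hb]) (by simp)] at key
    simp only [c, if_true] at key
    rw [← key]
    refine lintegral_congr fun z => ?_
    rw [← Finset.mul_prod_erase _ _ (Finset.mem_univ k)]
    have h1 : ∏ i ∈ Finset.univ.erase k, ρ i z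
        = ENNReal.ofReal (∏ i ∈ ({k} : Finset (Fin d))ᶜ, p i z) := by
      rw [ENNReal.ofReal_prod_of_nonneg fun i _ => ((hp i).1 z).le]
      refine Finset.prod_congr (by ext; simp) fun i hi => ?_
      have : i ≠ k := by simpa using hi
      simp [ρ, this]
    rw [h1]
    simp only [ρ, if_true, hφ]
    by_cases hz : z k ∈ s
    · rw [Set.indicator_of_mem hz, Set.indicator_of_mem (by exact hz),
        ENNReal.ofReal_mul (hr.1 _).le]
    · rw [Set.indicator_of_notMem hz, Set.indicator_of_notMem (by exact hz), zero_mul]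
  · intro i
    by_cases h : i = k
    · simp only [ρ, h, if_true]
      exact hφm.comp (measurable_pi_apply k)
    · simp only [ρ, h, if_false]
      exact (hp i).2.1.continuous.measurable.ennreal_ofReal
  · intro i z w hzw
    by_cases h : i = k
    · simp only [ρ, h, if_true]
      rw [hzw k h.ge]
    · simp only [ρ, h, if_false]
      rw [(hp i).2.2.1 z w]
      intro j hj
      rcases Finset.mem_insert.1 hj with rfl | hj
      · exact hzw _ le_rfl
      · exact hzw _ (hpa i j hj).le
  · intro i z
    by_cases h : i = k
    · subst h
      simp [ρ, c]
    · simp only [ρ, c, h, if_false]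
      exact lintegral_ofReal_eq_one (fun t => (hp i).1 _) ((hp i).2.2.2 z)

theorem integrable_of_isC1Density {r : ℝ → ℝ} (hr : IsC1Density r) : Integrable r := by
  by_contra h
  have h1 := hr.2.2
  rw [integral_undef h] at h1
  exact zero_ne_one h1

theorem cdfOfDensity_eq {r : ℝ → ℝ} (hr : IsC1Density r) (x : ℝ) :
    cdfOfDensity r x = (densityMeasure₁ r (Set.Iic x)).toReal := by
  rw [cdfOfDensity, densityMeasure₁, withDensity_apply _ measurableSet_Iic,
    integral_eq_lintegral_of_nonneg_ae (Filter.Eventually.of_forall fun x => (hr.1 x).le)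
      hr.2.1.continuous.aestronglyMeasurable]

theorem one_sub_cdfOfDensity_eq {r : ℝ → ℝ} (hr : IsC1Density r) (x : ℝ) :
    1 - cdfOfDensity r x = (densityMeasure₁ r (Set.Ici x)).toReal := by
  have hi := integrable_of_isC1Density hr
  have h := integral_add_compl (measurableSet_Iic (a := x)) hi
  rw [hr.2.2, Set.compl_Iic] at h
  rw [densityMeasure₁, withDensity_apply _ measurableSet_Ici,
    ← integral_eq_lintegral_of_nonneg_ae (Filter.Eventually.of_forall fun x => (hr.1 x).le)
      hr.2.1.continuous.aestronglyMeasurable, integral_Ici_eq_integral_Ioi, cdfOfDensity]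
  linarith

theorem cdfOfDensity_strictMono {r : ℝ → ℝ} (hr : IsC1Density r) :
    StrictMono (cdfOfDensity r) := by
  intro a b hab
  have hi := integrable_of_isC1Density hr
  have h := intervalIntegral.integral_Iic_sub_Iic (a := a) (b := b) hi.integrableOn hi.integrableOn
  have hpos := intervalIntegral.intervalIntegral_pos_of_pos hi.intervalIntegrable hr.1 hab
  simp only [cdfOfDensity]
  linarith

/-- **Corollary (further constraint on the indeterminacy set).** In the setting of
Theorem 1 (ii) (perfect single-node interventions with interventional discrepancy, matching
pushforwards), where `φ := f′⁻¹ ∘ f` acts componentwise as `φ(z) = (h 1 (z 1), …, h d (z d))`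
for C¹ diffeomorphisms `h k` of `ℝ`: for each `k`, either `h k` is the increasing transport
`G k⁻¹ ∘ F k` (equivalently `G k ∘ h k = F k`) or the decreasing transport `Ḡ k⁻¹ ∘ F k`
(equivalently `G k ∘ h k = 1 − F k`), where `F k`, `G k` are the cdfs of `pt k`, `qt k`.
In particular, if `pt k = qt k` for all `k`, then each `h k` is either the identity or the
order-reversing map `F k⁻¹ ∘ (1 − F k)`. -/
theorem cauca_scaling_indeterminacy_cdf {d : ℕ}
    (pa : Fin d → Finset (Fin d))
    (hpa : ∀ i : Fin d, ∀ j ∈ pa i, j < i)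
    (p q : Fin d → (Fin d → ℝ) → ℝ)
    (hp : IsCondFamily pa p) (hq : IsCondFamily pa q)
    (pt qt : Fin d → ℝ → ℝ)
    (hpt : ∀ k, IsC1Density (pt k)) (hqt : ∀ k, IsC1Density (qt k))
    (hdiscp : ∀ k : Fin d, ∀ᵐ (z : Fin d → ℝ) ∂volume,
        fderiv ℝ (fun w => Real.log (p k w)) z (Pi.single k 1) ≠
          deriv (fun t => Real.log (pt k t)) (z k))
    (hdiscq : ∀ k : Fin d, ∀ᵐ (z : Fin d → ℝ) ∂volume,
        fderiv ℝ (fun w => Real.log (q k w)) z (Pi.single k 1) ≠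
          deriv (fun t => Real.log (qt k t)) (z k))
    (f f' g' : (Fin d → ℝ) → (Fin d → ℝ))
    (hf : IsC1Diffeo f) (hf' : ContDiff ℝ 1 f') (hg' : ContDiff ℝ 1 g')
    (hinv₁ : Function.LeftInverse g' f') (hinv₂ : Function.RightInverse g' f')
    (hmatch0 : Measure.map f (densityMeasure (jointDensity p)) =
        Measure.map f' (densityMeasure (jointDensity q)))
    (hmatch : ∀ k : Fin d,
        Measure.map f (densityMeasure fun z =>
            pt k (z k) * ∏ i ∈ ({k} : Finset (Fin d))ᶜ, p i z) =
        Measure.map f' (densityMeasure fun z =>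
            qt k (z k) * ∏ i ∈ ({k} : Finset (Fin d))ᶜ, q i z))
    (hs : Fin d → ℝ → ℝ) (hhs : ∀ i, IsC1Diffeo (hs i))
    (hφ : ∀ (z : Fin d → ℝ) (i : Fin d), g' (f z) i = hs i (z i)) :
    (∀ k : Fin d,
      (∀ x : ℝ, cdfOfDensity (qt k) (hs k x) = cdfOfDensity (pt k) x) ∨
      (∀ x : ℝ, cdfOfDensity (qt k) (hs k x) = 1 - cdfOfDensity (pt k) x)) ∧
    ((∀ k, pt k = qt k) → ∀ k : Fin d,
      (∀ x : ℝ, hs k x = x) ∨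
      (∀ x : ℝ, cdfOfDensity (pt k) (hs k x) = 1 - cdfOfDensity (pt k) x)) := by
  -- PROOF
  have hmono : ∀ k, StrictMono (hs k) ∨ StrictAnti (hs k) := by
    intro k
    obtain ⟨hc, g, _, hl, _⟩ := hhs k
    exact hc.continuous.strictMono_of_inj hl.injective
  have hmap : ∀ k, Measure.map (hs k) (densityMeasure₁ (pt k)) = densityMeasure₁ (qt k) := by
    intro k
    have hfm := hf.1.continuous.measurable
    have hgm := hg'.continuous.measurable
    have hsm := (hhs k).1.continuous.measurable
    have h := congrArg (Measure.map (fun z : Fin d → ℝ => z k))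
      (congrArg (Measure.map g') (hmatch k))
    rw [Measure.map_map hgm hfm, Measure.map_map hgm hf'.continuous.measurable, hinv₁.comp_eq_id,
      Measure.map_id, map_eval_interventional pa hpa q hq _ (hqt k),
      Measure.map_map (measurable_pi_apply k) (hgm.comp hfm)] at h
    rw [← h, ← map_eval_interventional pa hpa p hp _ (hpt k) k,
      Measure.map_map hsm (measurable_pi_apply k)]
    congr 1
    funext z
    exact (hφ z k).symm
  have hcdf : ∀ k x, cdfOfDensity (qt k) (hs k x)
      = (densityMeasure₁ (pt k) (hs k ⁻¹' Set.Iic (hs k x))).toReal := by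
    intro k x
    rw [cdfOfDensity_eq (hqt k), ← hmap k,
      Measure.map_apply (hhs k).1.continuous.measurable measurableSet_Iic]
  have hinc : ∀ k, StrictMono (hs k) →
      ∀ x, cdfOfDensity (qt k) (hs k x) = cdfOfDensity (pt k) x := by
    intro k h x
    have : hs k ⁻¹' Set.Iic (hs k x) = Set.Iic x := by
      ext y; simp [h.le_iff_le]
    rw [hcdf, this, cdfOfDensity_eq (hpt k)]
  have hdec : ∀ k, StrictAnti (hs k) →
      ∀ x, cdfOfDensity (qt k) (hs k x) = 1 - cdfOfDensity (pt k) x := by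
    intro k h x
    have : hs k ⁻¹' Set.Iic (hs k x) = Set.Ici x := by
      ext y; simp [h.le_iff_ge]
    rw [hcdf, this, one_sub_cdfOfDensity_eq (hpt k)]
  refine ⟨fun k => (hmono k).imp (hinc k) (hdec k), fun heq k => ?_⟩
  rcases hmono k with h | h
  · left
    intro x
    have := hinc k h x
    rw [← heq k] at this
    exact (cdfOfDensity_strictMono (hpt k)).injective this
  · right
    intro x
    have := hdec k h x
    rwa [← heq k] at this
end
end

section
/- Let d ≥ 2 and let G be a DAG on [d] (topologically ordered) such that the node d has at least one parent (pa(d) ≠ ∅). Then CauCA with d−1 perfect single-node interventions on the distinct targets 1,…,d−1 is not identifiable up to S_reparam: there exist C¹ conditional-density families (p_i), (q_i) for G, perfect intervened strictly positive C¹ densities p̃_k, q̃_k on ℝ for k ∈ [d−1] satisfying the interventional discrepancy, and C¹ diffeomorphisms f, f′ : ℝ^d → ℝ^d such that f_*P^k = f′_*Q^k for every k ∈ {0,1,…,d−1}, while f′⁻¹∘f ∉ S_reparam. -/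
open MeasureTheory

noncomputable section

open ProbabilityTheory in
/-- Gaussian density of mean `a` and variance one. -/
def gD (a x : ℝ) : ℝ := gaussianPDFReal a 1 x

lemma gD_pos (a x : ℝ) : 0 < gD a x := ProbabilityTheory.gaussianPDFReal_pos _ _ _ one_ne_zero

lemma gD_contDiff (a : ℝ) : ContDiff ℝ 1 (gD a) := by
  unfold gD ProbabilityTheory.gaussianPDFReal
  fun_prop

lemma gD_int (a : ℝ) : ∫ x, gD a x = 1 :=
  ProbabilityTheory.integral_gaussianPDFReal_eq_one _ one_ne_zero

lemma gD_log (a x : ℝ) : HasDerivAt (fun t => Real.log (gD a t)) (-(x - a)) x := by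
  have h1 : (fun t => Real.log (gD a t)) =
      fun t => Real.log ((Real.sqrt (2 * Real.pi * 1))⁻¹) + (-(t - a) ^ 2 / (2 * 1)) := by
    funext t
    unfold gD ProbabilityTheory.gaussianPDFReal
    rw [Real.log_mul (by positivity) (by positivity), Real.log_exp]
    simp
  rw [h1]
  have h2 : HasDerivAt (fun t : ℝ => -(t - a) ^ 2 / (2 * 1)) (-(2 * (x - a)) / (2 * 1)) x := by
    have := ((((hasDerivAt_id x).sub_const a).pow 2).neg).div_const (2 * 1)
    simpa using this
  have h3 := h2.const_add (Real.log ((Real.sqrt (2 * Real.pi * 1))⁻¹))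
  have e : -(x - a) = -(2 * (x - a)) / (2 * 1) := by ring
  rw [e]
  exact h3

/-- Add `c` times coordinate `j` to coordinate `l`. -/
def shear {n : ℕ} (l j : Fin n) (c : ℝ) (z : Fin n → ℝ) : Fin n → ℝ :=
  z + Pi.single l (c * z j)

lemma shear_contDiff {n : ℕ} (l j : Fin n) (c : ℝ) : ContDiff ℝ 1 (shear l j c) := by
  rw [contDiff_pi]
  intro i
  by_cases h : i = l
  · subst h
    simp only [shear, Pi.add_apply, Pi.single_eq_same]
    fun_prop
  · simp only [shear, Pi.add_apply, Pi.single_eq_of_ne h]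
    fun_prop

lemma shear_same {n : ℕ} (l j : Fin n) (c : ℝ) (z) : shear l j c z l = z l + c * z j := by
  simp [shear]

lemma shear_ne {n : ℕ} (l j : Fin n) (c : ℝ) (z) {i} (h : i ≠ l) : shear l j c z i = z i := by
  simp [shear, h]

lemma shear_shear {n : ℕ} {l j : Fin n} (h : j ≠ l) (c c' : ℝ) (hc : c + c' = 0) (z) :
    shear l j c (shear l j c' z) = z := by
  funext i
  by_cases hi : i = l
  · subst hi
    rw [shear_same, shear_same, shear_ne _ _ _ _ h]
    linear_combination z j * hc
  · rw [shear_ne _ _ _ _ hi, shear_ne _ _ _ _ hi]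

lemma shear_mp {n : ℕ} {l j : Fin n} (h : j ≠ l) (c : ℝ) :
    MeasurePreserving (shear l j c) := by
  have := Real.volume_preserving_transvectionStruct (⟨l, j, h.symm, c⟩ : Matrix.TransvectionStruct (Fin n) ℝ)
  convert this using 1
  funext z
  simp [shear, Matrix.TransvectionStruct.toMatrix, Matrix.transvection,
    Matrix.single_mulVec]
  rfl

lemma shear_map {n : ℕ} {l j : Fin n} (h : j ≠ l) (c : ℝ) (ρ ρ' : (Fin n → ℝ) → ℝ)
    (hm : Measurable ρ') (hρ : ∀ z, ρ z = ρ' (shear l j c z)) :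
    Measure.map (shear l j c) (densityMeasure ρ) = densityMeasure ρ' := by
  have mp := shear_mp h c
  ext s hs
  rw [Measure.map_apply mp.measurable hs, densityMeasure, densityMeasure,
    withDensity_apply _ (mp.measurable hs), withDensity_apply _ hs]
  simp_rw [hρ]
  exact mp.setLIntegral_comp_preimage hs (f := fun z => ENNReal.ofReal (ρ' z)) (by fun_prop)

/-- Independent standard Gaussian factors. -/
def pF {n : ℕ} (i : Fin n) (z : Fin n → ℝ) : ℝ := gD 0 (z i)

/-- Sheared Gaussian factors. -/
def qF {n : ℕ} (l j : Fin n) (i : Fin n) (z : Fin n → ℝ) : ℝ := gD 0 (shear l j (-1) z i)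

lemma pF_qF {n : ℕ} {l j : Fin n} (h : j ≠ l) (i : Fin n) (z : Fin n → ℝ) :
    pF i z = qF l j i (shear l j 1 z) := by
  rw [qF, shear_shear h _ _ (by norm_num)]; rfl

lemma pF_cd {n : ℕ} (i : Fin n) : ContDiff ℝ 1 (pF i) :=
  (gD_contDiff 0).comp (contDiff_apply ℝ ℝ i)

lemma qF_cd {n : ℕ} (l j i : Fin n) : ContDiff ℝ 1 (qF l j i) :=
  (pF_cd i).comp (shear_contDiff l j (-1))

lemma pF_cond {n : ℕ} (pa : Fin n → Finset (Fin n)) : IsCondFamily pa pF := by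
  intro i
  refine ⟨fun z => gD_pos _ _, pF_cd i, ?_, ?_⟩
  · intro z w h
    simp [pF, h i (by simp)]
  · intro z
    simpa [pF] using gD_int 0

lemma qF_cond {n : ℕ} (pa : Fin n → Finset (Fin n)) {l j : Fin n} (h : j ≠ l) (hj : j ∈ pa l) :
    IsCondFamily pa (qF l j) := by
  intro i
  refine ⟨fun z => gD_pos _ _, qF_cd l j i, ?_, ?_⟩
  · intro z w H
    by_cases hi : i = l
    · subst hi
      simp [qF, shear_same, H i (by simp), H j (by simp [hj])]
    · simp [qF, shear_ne _ _ _ _ hi, H i (by simp)]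
  · intro z
    by_cases hi : i = l
    · subst hi
      simp only [qF, shear_same, Function.update_self, Function.update_of_ne h]
      rw [integral_add_right_eq_self (gD 0)]
      exact gD_int 0
    · simp only [qF, shear_ne _ _ _ _ hi, Function.update_self]
      exact gD_int 0

lemma pF_disc {n : ℕ} (i : Fin n) (z : Fin n → ℝ) :
    fderiv ℝ (fun w => Real.log (pF i w)) z (Pi.single i 1) ≠
      deriv (fun t => Real.log (gD 1 t)) (z i) := by
  have h1 : HasFDerivAt (fun w : Fin n → ℝ => Real.log (pF i w))
      ((-(z i - 0)) • (ContinuousLinearMap.proj i : (Fin n → ℝ) →L[ℝ] ℝ)) z :=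
    HasDerivAt.comp_hasFDerivAt (f := fun w : Fin n → ℝ => w i) z (gD_log 0 (z i))
      (hasFDerivAt_apply i z)
  rw [h1.fderiv, (gD_log 1 (z i)).deriv]
  simp
  intro h
  linarith

/-- **Proposition (d−1 interventions are not sufficient for CauCA).** (Here the dimension is
`d = m + 2 ≥ 2`; the intervened targets are the first `d − 1` nodes `k.castSucc` for
`k : Fin (m+1)`, and the unintervened node is the last node.) If the last node of the
(topologically ordered) DAG has at least one parent, then CauCA with `d − 1` perfect
single-node stochastic interventions on the distinct targets `1, …, d−1` is not identifiable
up to `S_reparam`: there exist two models with matching pushforwards in all regimes whose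
transition map `f′⁻¹ ∘ f` is not in `S_reparam`. -/
theorem cauca_d_minus_one_interventions_not_identifiable {m : ℕ}
    (pa : Fin (m + 2) → Finset (Fin (m + 2)))
    (hpa : ∀ i : Fin (m + 2), ∀ j ∈ pa i, j < i)
    (hlast : pa (Fin.last (m + 1)) ≠ ∅) :
    ∃ (p q : Fin (m + 2) → (Fin (m + 2) → ℝ) → ℝ)
      (pt qt : Fin (m + 1) → ℝ → ℝ)
      (f f' g' : (Fin (m + 2) → ℝ) → (Fin (m + 2) → ℝ)),
      IsCondFamily pa p ∧ IsCondFamily pa q ∧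
      (∀ k, IsC1Density (pt k)) ∧ (∀ k, IsC1Density (qt k)) ∧
      (∀ k : Fin (m + 1), ∀ᵐ (z : Fin (m + 2) → ℝ) ∂volume,
        fderiv ℝ (fun w => Real.log (p k.castSucc w)) z (Pi.single k.castSucc 1) ≠
          deriv (fun t => Real.log (pt k t)) (z k.castSucc)) ∧
      (∀ k : Fin (m + 1), ∀ᵐ (z : Fin (m + 2) → ℝ) ∂volume,
        fderiv ℝ (fun w => Real.log (q k.castSucc w)) z (Pi.single k.castSucc 1) ≠
          deriv (fun t => Real.log (qt k t)) (z k.castSucc)) ∧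
      IsC1Diffeo f ∧ ContDiff ℝ 1 f' ∧ ContDiff ℝ 1 g' ∧
      Function.LeftInverse g' f' ∧ Function.RightInverse g' f' ∧
      Measure.map f (densityMeasure (jointDensity p)) =
        Measure.map f' (densityMeasure (jointDensity q)) ∧
      (∀ k : Fin (m + 1),
        Measure.map f (densityMeasure fun z =>
            pt k (z k.castSucc) *
              ∏ i ∈ ({k.castSucc} : Finset (Fin (m + 2)))ᶜ, p i z) =
        Measure.map f' (densityMeasure fun z =>
            qt k (z k.castSucc) *
              ∏ i ∈ ({k.castSucc} : Finset (Fin (m + 2)))ᶜ, q i z)) ∧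
      ¬ InSReparam (g' ∘ f) := by
  obtain ⟨j, hj⟩ := Finset.nonempty_iff_ne_empty.mpr hlast
  have hjl : j ≠ Fin.last (m + 1) := (hpa _ _ hj).ne
  set l := Fin.last (m + 1) with hl
  have hk : ∀ k : Fin (m + 1), k.castSucc ≠ l := fun k => (Fin.castSucc_lt_last k).ne
  have hqp : ∀ k : Fin (m + 1), qF l j k.castSucc = pF k.castSucc := by
    intro k
    funext z
    simp [qF, pF, shear_ne _ _ _ _ (hk k)]
  have hqm : ∀ i, Measurable (qF l j i) := fun i => (qF_cd l j i).continuous.measurable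
  have hgm : Measurable (gD 1) := (gD_contDiff 1).continuous.measurable
  refine ⟨pF, qF l j, fun _ => gD 1, fun _ => gD 1, shear l j 1, id, id, pF_cond pa,
    qF_cond pa hjl hj, fun _ => ⟨gD_pos 1, gD_contDiff 1, gD_int 1⟩,
    fun _ => ⟨gD_pos 1, gD_contDiff 1, gD_int 1⟩, fun k => ?_, fun k => ?_,
    ⟨shear_contDiff _ _ _, shear l j (-1), shear_contDiff _ _ _,
      shear_shear hjl _ _ (by norm_num), shear_shear hjl _ _ (by norm_num)⟩,
    contDiff_id, contDiff_id, fun _ => rfl, fun _ => rfl, ?_, fun k => ?_, ?_⟩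
  · exact Filter.Eventually.of_forall fun z => pF_disc _ z
  · rw [hqp]
    exact Filter.Eventually.of_forall fun z => pF_disc _ z
  · rw [Measure.map_id]
    refine shear_map hjl _ _ _ ?_ ?_
    · unfold jointDensity
      fun_prop
    · intro z
      exact Finset.prod_congr rfl fun i _ => pF_qF hjl i z
  · rw [Measure.map_id]
    refine shear_map hjl _ _ _ ?_ ?_
    · fun_prop
    · intro z
      rw [shear_ne _ _ _ _ (hk k)]
      congr 1
      exact Finset.prod_congr rfl fun i _ => pF_qF hjl i z
  · rintro ⟨σ, hs, -, H⟩
    have key : ∀ i, i ≠ σ l → (shear l j 1 (Pi.single i 1) l : ℝ) = shear l j 1 0 l := by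
      intro i hi
      have h1 := H (Pi.single i 1) l
      have h2 := H 0 l
      simp only [Function.comp, id] at h1 h2
      rw [h1, h2, Pi.single_eq_of_ne hi.symm]
      rfl
    by_cases hσ : l = σ l
    · have := key j (by rw [← hσ]; exact hjl)
      simp [shear_same, hjl.symm] at this
    · have := key l hσ
      simp [shear_same, hjl] at this
end
end

section
/- Let G be a DAG on [d]. Consider two models given by C¹ conditional-density families (p_i) and (q_i) for G together with, for each target set τ in a finite collection T of strict subsets of [d] with ⋃_{τ∈T} τ = [d] and n_τ := |τ|, a family of perfect fat-hand interventional regimes with target τ, in which the factors indexed by τ are replaced by a strictly positive C¹ joint intervened density over z_τ ∈ ℝ^{n_τ} (with no conditioning on other variables). Assume the block-interventional discrepancy for each τ ∈ T in both models: if τ has no parents in [d]∖τ, there are n_τ interventional regimes with target τ such that the n_τ×n_τ matrix with (s,j)-entry ∂/∂z_{τ,j}[log q^s_τ − log q^0_τ](z_τ) is invertible for Lebesgue-a.e. z_τ ∈ ℝ^{n_τ}, where q^s_τ is the intervened block density of the s-th such regime and q^0_τ is the unintervened joint mechanism of the block; otherwise, there are n_τ + 1 interventional regimes with target τ such that the same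 matrix, formed with the log-differences between intervened block densities only (s = 0,…,n_τ indexing interventions, no unintervened regime), is invertible a.e. Let f, f′ : ℝ^d → ℝ^d be C¹ diffeomorphisms such that the pushforward f_*P^r equals f′_*Q^r for the unintervened regime and for every interventional regime r. Then φ := f′⁻¹∘f is block-identifiable: for each τ ∈ T the components (φ_i)_{i∈τ} depend only on the coordinates z_τ, and the induced map φ_τ : ℝ^{n_τ} → ℝ^{n_τ} is a diffeomorphism. -/
open MeasureTheory

noncomputable section

/-- The observational joint mechanism of the block `τ`: the product of the causal mechanisms
of the nodes in `τ`. -/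
def blockMech {d : ℕ} (p : Fin d → (Fin d → ℝ) → ℝ) (τ : Finset (Fin d)) :
    (Fin d → ℝ) → ℝ := fun z => ∏ i ∈ τ, p i z

/-- The `j`-th element of the block `τ` (under the canonical enumeration of `τ`). -/
def coordOf {d : ℕ} (τ : Finset (Fin d)) (j : Fin τ.card) : Fin d :=
  ((τ.equivFin.symm j : τ) : Fin d)

/-- A strictly positive C¹ joint intervened density over the block `τ` (no conditioning on
other variables): it depends only on the coordinates in `τ` and integrates to 1 over the
block. -/
def IsBlockDensity {d : ℕ} (τ : Finset (Fin d)) (r : (Fin d → ℝ) → ℝ) : Prop :=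
  (∀ z, 0 < r z) ∧ ContDiff ℝ 1 r ∧ DependsOnlyOn r τ ∧
    ∀ z : Fin d → ℝ,
      (∫ y : {x // x ∈ τ} → ℝ, r (fun j => if h : j ∈ τ then y ⟨j, h⟩ else z j)) = 1

/-- Embed a configuration of the block `τ` into `ℝ^d`, filling the other coordinates
with `0`. -/
def fillBlock {d : ℕ} (τ : Finset (Fin d)) (y : {x // x ∈ τ} → ℝ) : Fin d → ℝ :=
  fun j => if h : j ∈ τ then y ⟨j, h⟩ else 0

/-- The map `ℝ^τ → ℝ^τ` induced by the components of `φ` indexed by `τ` (well defined when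
those components depend only on the coordinates in `τ`). -/
def blockMap {d : ℕ} (φ : (Fin d → ℝ) → (Fin d → ℝ)) (τ : Finset (Fin d)) :
    ({x // x ∈ τ} → ℝ) → ({x // x ∈ τ} → ℝ) :=
  fun y i => φ (fillBlock τ y) (i : Fin d)

lemma map_cancel_aux {d : ℕ} {f f' g' : (Fin d → ℝ) → (Fin d → ℝ)}
    (hf : Continuous f) (hf' : Continuous f') (hg' : Continuous g')
    (hinv : Function.LeftInverse g' f') {μ ν : Measure (Fin d → ℝ)}
    (h : Measure.map f μ = Measure.map f' ν) :
    Measure.map (fun z => g' (f z)) μ = ν := by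
  have h1 : Measure.map g' (Measure.map f μ) = Measure.map g' (Measure.map f' ν) := by rw [h]
  rw [Measure.map_map hg'.measurable hf.measurable,
    Measure.map_map hg'.measurable hf'.measurable] at h1
  have h2 : g' ∘ f' = id := funext hinv
  rw [h2, Measure.map_id] at h1
  exact h1

lemma vol_ac_aux {d : ℕ} {ρ : (Fin d → ℝ) → ℝ} (hc : Continuous ρ) (hpos : ∀ z, 0 < ρ z) :
    (volume : Measure (Fin d → ℝ)) ≪ densityMeasure ρ := by
  refine withDensity_absolutelyContinuous' ?_ ?_
  · exact (ENNReal.measurable_ofReal.comp hc.measurable).aemeasurable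
  · exact Filter.Eventually.of_forall fun z => by simp [hpos z]

lemma density_split_aux {d : ℕ} {ρ0 ρ1 : (Fin d → ℝ) → ℝ} (hc0 : Continuous ρ0)
    (hc1 : Continuous ρ1) (hp0 : ∀ z, 0 < ρ0 z) :
    densityMeasure ρ1 =
      (densityMeasure ρ0).withDensity (fun z => ENNReal.ofReal (ρ1 z / ρ0 z)) := by
  have hq : Continuous fun z => ρ1 z / ρ0 z := hc1.div hc0 fun z => (hp0 z).ne'
  unfold densityMeasure
  have e1 : Measurable fun z => ENNReal.ofReal (ρ0 z) :=
    ENNReal.measurable_ofReal.comp hc0.measurable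
  have e2 : Measurable fun z => ENNReal.ofReal (ρ1 z / ρ0 z) :=
    ENNReal.measurable_ofReal.comp hq.measurable
  rw [← withDensity_mul _ e1 e2]
  congr 1
  funext z
  simp only [Pi.mul_apply]
  rw [← ENNReal.ofReal_mul (hp0 z).le, mul_div_cancel₀ _ (hp0 z).ne']

lemma ratio_aux_s9 {d : ℕ} {φ ψ : (Fin d → ℝ) → (Fin d → ℝ)} (hφ : Continuous φ)
    (hψ : Continuous ψ) (h1 : Function.LeftInverse ψ φ)
    {ρ0 ρ1 σ0 σ1 : (Fin d → ℝ) → ℝ}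
    (hρ0 : Continuous ρ0) (hρ1 : Continuous ρ1) (hσ0 : Continuous σ0) (hσ1 : Continuous σ1)
    (pρ0 : ∀ z, 0 < ρ0 z) (pρ1 : ∀ z, 0 < ρ1 z) (pσ0 : ∀ z, 0 < σ0 z) (pσ1 : ∀ z, 0 < σ1 z)
    (m0 : Measure.map φ (densityMeasure ρ0) = densityMeasure σ0)
    (m1 : Measure.map φ (densityMeasure ρ1) = densityMeasure σ1) (z : Fin d → ℝ) :
    ρ1 z / ρ0 z = σ1 (φ z) / σ0 (φ z) := by
  have hqρ : Continuous fun z => ρ1 z / ρ0 z := hρ1.div hρ0 fun z => (pρ0 z).ne'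
  have hqσ : Continuous fun z => σ1 z / σ0 z := hσ1.div hσ0 fun z => (pσ0 z).ne'
  have hu : Measurable fun z => ENNReal.ofReal (ρ1 (ψ z) / ρ0 (ψ z)) :=
    ENNReal.measurable_ofReal.comp (hqρ.comp hψ).measurable
  have hv : Measurable fun z => ENNReal.ofReal (σ1 z / σ0 z) :=
    ENNReal.measurable_ofReal.comp hqσ.measurable
  have hsf : SigmaFinite (densityMeasure σ0) :=
    SigmaFinite.withDensity_of_ne_top (Filter.Eventually.of_forall fun z => by simp)
  have key : (densityMeasure σ0).withDensity (fun z => ENNReal.ofReal (ρ1 (ψ z) / ρ0 (ψ z))) =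
      (densityMeasure σ0).withDensity (fun z => ENNReal.ofReal (σ1 z / σ0 z)) := by
    rw [← density_split_aux hσ0 hσ1 pσ0, ← m1, ← m0, density_split_aux hρ0 hρ1 pρ0]
    ext s hs
    rw [withDensity_apply _ hs, Measure.map_apply hφ.measurable hs,
      withDensity_apply _ (hφ.measurable hs), setLIntegral_map hs hu hφ.measurable]
    simp only [h1 _]
  rw [withDensity_eq_iff_of_sigmaFinite hu.aemeasurable hv.aemeasurable] at key
  have key2 := (vol_ac_aux hσ0 pσ0).ae_eq key
  have key3 : (fun z => ρ1 (ψ z) / ρ0 (ψ z)) =ᵐ[volume] fun z => σ1 z / σ0 z := by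
    filter_upwards [key2] with w hw
    exact (ENNReal.ofReal_eq_ofReal_iff (div_pos (pρ1 _) (pρ0 _)).le
      (div_pos (pσ1 _) (pσ0 _)).le).1 hw
  have key4 := (Continuous.ae_eq_iff_eq volume (hqρ.comp hψ) hqσ).1 key3
  have := congrFun key4 (φ z)
  simpa [h1 z] using this

lemma ae_comp_aux {d : ℕ} {φ : (Fin d → ℝ) → (Fin d → ℝ)} (hφ : Continuous φ)
    {ρ0 σ0 : (Fin d → ℝ) → ℝ} (hρ0 : Continuous ρ0) (pρ0 : ∀ z, 0 < ρ0 z)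
    (m0 : Measure.map φ (densityMeasure ρ0) = densityMeasure σ0)
    {A : (Fin d → ℝ) → Prop} (hA : ∀ᵐ z ∂volume, A z) : ∀ᵐ z ∂volume, A (φ z) := by
  have h1 : ∀ᵐ z ∂(densityMeasure σ0), A z :=
    (withDensity_absolutelyContinuous volume _).ae_le hA
  rw [← m0] at h1
  exact (vol_ac_aux hρ0 pρ0).ae_le (ae_of_ae_map hφ.measurable.aemeasurable h1)

lemma fderiv_zero_aux {d : ℕ} {S : Finset (Fin d)} {F : (Fin d → ℝ) → ℝ}
    (hF : DependsOnlyOn F S) (hd : Differentiable ℝ F) (z v : Fin d → ℝ)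
    (hv : ∀ i ∈ S, v i = 0) : fderiv ℝ F z v = 0 := by
  have h1 := (hd z).hasFDerivAt.hasLineDerivAt v
  rw [← h1.lineDeriv, lineDeriv]
  have : (fun t : ℝ => F (z + t • v)) = fun _ => F z := by
    funext t
    apply hF
    intro i hi
    simp [hv i hi]
  rw [this, deriv_const]

lemma core_aux {d : ℕ} {τ : Finset (Fin d)} {φ : (Fin d → ℝ) → (Fin d → ℝ)}
    (hφ : ContDiff ℝ 1 φ) {h h' : Fin τ.card → (Fin d → ℝ) → ℝ}
    (hc : ∀ s, Differentiable ℝ (h s)) (hc' : ∀ s, Differentiable ℝ (h' s))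
    (hd : ∀ s, DependsOnlyOn (h s) τ) (hd' : ∀ s, DependsOnlyOn (h' s) τ)
    (heq : ∀ s z, h s z = h' s (φ z))
    (hLI : ∀ᵐ z ∂volume, LinearIndependent ℝ (fun s : Fin τ.card => fun j : Fin τ.card =>
          fderiv ℝ (h' s) (φ z) (Pi.single (coordOf τ j) 1))) :
    ∀ i ∈ τ, DependsOnlyOn (fun z => φ z i) τ := by
  have hφd : Differentiable ℝ φ := hφ.differentiable (by norm_num)
  have step : ∀ v : Fin d → ℝ, (∀ i ∈ τ, v i = 0) → ∀ i ∈ τ, ∀ z, fderiv ℝ φ z v i = 0 := by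
    intro v hv i hi
    have hcont : Continuous fun z => fderiv ℝ φ z v i := by
      have h1 : Continuous fun z => fderiv ℝ φ z v :=
        (hφ.continuous_fderiv (by norm_num)).clm_apply continuous_const
      exact (continuous_apply i).comp h1
    have hae : (fun z => fderiv ℝ φ z v i) =ᵐ[volume] fun _ => (0 : ℝ) := by
      filter_upwards [hLI] with z hz
      set w := fderiv ℝ φ z v with hw
      let A : Matrix (Fin τ.card) (Fin τ.card) ℝ := fun s j =>
        fderiv ℝ (h' s) (φ z) (Pi.single (coordOf τ j) 1)
      have hA : IsUnit A := Matrix.linearIndependent_rows_iff_isUnit.1 hz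
      have hinj := Matrix.mulVec_injective_iff_isUnit.2 hA
      have hmul : A.mulVec (fun j => w (coordOf τ j)) = A.mulVec 0 := by
        rw [Matrix.mulVec_zero]
        funext s
        have e0 : fderiv ℝ (h' s) (φ z) w = 0 := by
          have e1 := fderiv_zero_aux (hd s) (hc s) z v hv
          have e2 : h s = h' s ∘ φ := funext (heq s)
          rw [e2, fderiv_comp z (hc' s _) (hφd z)] at e1
          exact e1
        have e3 : fderiv ℝ (h' s) (φ z)
            (w - ∑ j, w (coordOf τ j) • (Pi.single (coordOf τ j) 1 : Fin d → ℝ)) = 0 := by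
          apply fderiv_zero_aux (hd' s) (hc' s)
          intro k hk
          have hk2 : coordOf τ (τ.equivFin ⟨k, hk⟩) = k := by simp [coordOf]
          have hcinj : Function.Injective (coordOf τ) := fun a b hab =>
            τ.equivFin.symm.injective (Subtype.ext hab)
          simp only [Pi.sub_apply, Finset.sum_apply, Pi.smul_apply, smul_eq_mul]
          rw [Finset.sum_eq_single (τ.equivFin ⟨k, hk⟩)]
          · rw [hk2]; simp
          · intro b _ hb
            rw [Pi.single_eq_of_ne, mul_zero]
            intro hkb
            apply hb
            apply hcinj
            rw [hk2, ← hkb]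
          · simp
        rw [map_sub, e0, map_sum, zero_sub, neg_eq_zero] at e3
        simp only [map_smul, smul_eq_mul] at e3
        simp only [Matrix.mulVec, dotProduct, Pi.zero_apply]
        rw [← e3]
        exact Finset.sum_congr rfl fun j _ => mul_comm _ _
      have := congrFun (hinj hmul) (τ.equivFin ⟨i, hi⟩)
      simpa [coordOf] using this
    exact congrFun ((Continuous.ae_eq_iff_eq volume hcont continuous_const).1 hae)
  intro i hi z w hzw
  have hder : ∀ t : ℝ, HasDerivAt (fun t : ℝ => φ (z + t • (w - z)) i) 0 t := by
    intro t
    have h1 : HasDerivAt (fun t : ℝ => z + t • (w - z)) (w - z) t := by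
      simpa using ((hasDerivAt_id t).smul_const (w - z)).const_add z
    have h2 := ((hφd (z + t • (w - z))).hasFDerivAt).comp_hasDerivAt t h1
    have h3 := hasDerivAt_pi.1 h2 i
    rw [step (w - z) (fun k hk => by simp [hzw k hk]) i hi] at h3
    exact h3
  have := is_const_of_deriv_eq_zero (fun t => (hder t).differentiableAt)
    (fun t => (hder t).deriv) 0 1
  simpa using this

lemma fillBlock_contDiff {d : ℕ} (τ : Finset (Fin d)) : ContDiff ℝ 1 (fillBlock τ) := by
  rw [contDiff_pi]
  intro j
  unfold fillBlock
  by_cases h : j ∈ τ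
  · simp only [h, dite_true]; exact contDiff_apply ℝ ℝ _
  · simp only [h, dite_false]; exact contDiff_const

lemma blockMap_contDiff {d : ℕ} {φ : (Fin d → ℝ) → (Fin d → ℝ)} (hφ : ContDiff ℝ 1 φ)
    (τ : Finset (Fin d)) : ContDiff ℝ 1 (blockMap φ τ) := by
  rw [contDiff_pi]
  intro j
  exact (contDiff_apply ℝ ℝ (j : Fin d)).comp (hφ.comp (fillBlock_contDiff τ))

lemma blockMap_leftInverse {d : ℕ} {φ ψ : (Fin d → ℝ) → (Fin d → ℝ)} {τ : Finset (Fin d)}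
    (h : Function.LeftInverse ψ φ) (hψ : ∀ i ∈ τ, DependsOnlyOn (fun z => ψ z i) τ) :
    Function.LeftInverse (blockMap ψ τ) (blockMap φ τ) := by
  intro y
  funext i
  have h1 := hψ i i.2 (fillBlock τ (blockMap φ τ y)) (φ (fillBlock τ y)) (fun k hk => by
    simp [fillBlock, blockMap, hk])
  change ψ (fillBlock τ (blockMap φ τ y)) i = y i
  rw [show ψ (fillBlock τ (blockMap φ τ y)) i = ψ (φ (fillBlock τ y)) i from h1, h]
  simp [fillBlock]

/-- The base factor is positive, C¹, and depends only on the block. -/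
lemma blockMech_aux {d : ℕ} {pa : Fin d → Finset (Fin d)} {p : Fin d → (Fin d → ℝ) → ℝ}
    (hp : IsCondFamily pa p) {τ : Finset (Fin d)} (hτ : ∀ i ∈ τ, pa i ⊆ τ) :
    (∀ z, 0 < blockMech p τ z) ∧ ContDiff ℝ 1 (blockMech p τ) ∧
      DependsOnlyOn (blockMech p τ) τ := by
  refine ⟨fun z => Finset.prod_pos fun i _ => (hp i).1 z,
    contDiff_prod fun i _ => (hp i).2.1, fun z w hzw => ?_⟩
  refine Finset.prod_congr rfl fun i hi => (hp i).2.2.1 z w fun k hk => hzw k ?_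
  rcases Finset.mem_insert.1 hk with rfl | hk
  · exact hi
  · exact hτ i hi hk

/-- **Theorem (fat-hand interventions: block identifiability).** Two models over the same
DAG, with perfect fat-hand interventions whose target sets `τ ∈ T` are strict subsets of the
nodes and cover all nodes. For each `τ ∈ T` there are `|τ|` interventional regimes with
intervened block densities `r τ s` (resp. `r' τ s`), plus a base block density `r0 τ`
(resp. `r0' τ`) which is the observational block mechanism if `τ` has no parents outside `τ`,
and an additional (matched) perfect fat-hand intervention otherwise. Assuming the
block-interventional discrepancy — almost everywhere, the `|τ| × |τ|` matrix of partial
log-density differences is invertible (phrased as linear independence of its rows) — for each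
`τ` in both models, and matching pushforwards `f⁎P = f′⁎Q` in the unintervened regime and all
interventional regimes, the map `φ := f′⁻¹ ∘ f` is block-identifiable: for each `τ ∈ T`, the
components of `φ` indexed by `τ` depend only on the coordinates `z_τ`, and the induced block
map `ℝ^{|τ|} → ℝ^{|τ|}` is a diffeomorphism. -/
theorem cauca_fat_hand_block_identifiability {d : ℕ}
    (pa : Fin d → Finset (Fin d))
    (hpa : ∀ i : Fin d, ∀ j ∈ pa i, j < i)
    (p q : Fin d → (Fin d → ℝ) → ℝ)
    (hp : IsCondFamily pa p) (hq : IsCondFamily pa q)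
    (T : Finset (Finset (Fin d)))
    (hcover : ∀ i : Fin d, ∃ τ ∈ T, i ∈ τ)
    (hstrict : ∀ τ ∈ T, τ ≠ Finset.univ)
    (f f' g' : (Fin d → ℝ) → (Fin d → ℝ))
    (hf : IsC1Diffeo f) (hf' : ContDiff ℝ 1 f') (hg' : ContDiff ℝ 1 g')
    (hinv₁ : Function.LeftInverse g' f') (hinv₂ : Function.RightInverse g' f')
    (r r' : (τ : Finset (Fin d)) → Fin τ.card → (Fin d → ℝ) → ℝ)
    (r0 r0' : (τ : Finset (Fin d)) → (Fin d → ℝ) → ℝ)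
    (hr : ∀ τ ∈ T, ∀ s : Fin τ.card, IsBlockDensity τ (r τ s))
    (hr' : ∀ τ ∈ T, ∀ s : Fin τ.card, IsBlockDensity τ (r' τ s))
    (hbase : ∀ τ ∈ T, (∀ i ∈ τ, pa i ⊆ τ) →
        r0 τ = blockMech p τ ∧ r0' τ = blockMech q τ)
    (hbase' : ∀ τ ∈ T, ¬(∀ i ∈ τ, pa i ⊆ τ) →
        IsBlockDensity τ (r0 τ) ∧ IsBlockDensity τ (r0' τ) ∧
        Measure.map f (densityMeasure fun z => r0 τ z * ∏ i ∈ τᶜ, p i z) =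
          Measure.map f' (densityMeasure fun z => r0' τ z * ∏ i ∈ τᶜ, q i z))
    (hdiscp : ∀ τ ∈ T, ∀ᵐ (z : Fin d → ℝ) ∂volume,
        LinearIndependent ℝ (fun s : Fin τ.card => fun j : Fin τ.card =>
          fderiv ℝ (fun w => Real.log (r τ s w) - Real.log (r0 τ w)) z
            (Pi.single (coordOf τ j) 1)))
    (hdiscq : ∀ τ ∈ T, ∀ᵐ (z : Fin d → ℝ) ∂volume,
        LinearIndependent ℝ (fun s : Fin τ.card => fun j : Fin τ.card =>
          fderiv ℝ (fun w => Real.log (r' τ s w) - Real.log (r0' τ w)) z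
            (Pi.single (coordOf τ j) 1)))
    (hmatch0 : Measure.map f (densityMeasure (jointDensity p)) =
        Measure.map f' (densityMeasure (jointDensity q)))
    (hmatch : ∀ τ ∈ T, ∀ s : Fin τ.card,
        Measure.map f (densityMeasure fun z => r τ s z * ∏ i ∈ τᶜ, p i z) =
        Measure.map f' (densityMeasure fun z => r' τ s z * ∏ i ∈ τᶜ, q i z)) :
    ∀ τ ∈ T,
      (∀ i ∈ τ, DependsOnlyOn (fun z => g' (f z) i) τ) ∧
      IsC1Diffeo (blockMap (fun z => g' (f z)) τ) := by
  intro τ hτ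
  obtain ⟨hfc, g, hgc, hg1, hg2⟩ := hf
  set φ : (Fin d → ℝ) → (Fin d → ℝ) := fun z => g' (f z) with hφdef
  let ψ : (Fin d → ℝ) → (Fin d → ℝ) := fun z => g (f' z)
  have hφ : ContDiff ℝ 1 φ := hg'.comp hfc
  have hψ : ContDiff ℝ 1 ψ := hgc.comp hf'
  have hψφ : Function.LeftInverse ψ φ := fun z => by
    change g (f' (g' (f z))) = z
    rw [hinv₂, hg1]
  have hφψ : Function.LeftInverse φ ψ := fun z => by
    change g' (f (g (f' z))) = z
    rw [hg2, hinv₁]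
  -- base block densities
  have hb : ((∀ z, 0 < r0 τ z) ∧ ContDiff ℝ 1 (r0 τ) ∧ DependsOnlyOn (r0 τ) τ) ∧
      ((∀ z, 0 < r0' τ z) ∧ ContDiff ℝ 1 (r0' τ) ∧ DependsOnlyOn (r0' τ) τ) ∧
      Measure.map f (densityMeasure fun z => r0 τ z * ∏ i ∈ τᶜ, p i z) =
          Measure.map f' (densityMeasure fun z => r0' τ z * ∏ i ∈ τᶜ, q i z) := by
    by_cases hcl : ∀ i ∈ τ, pa i ⊆ τ
    · obtain ⟨e1, e2⟩ := hbase τ hτ hcl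
      rw [e1, e2]
      refine ⟨blockMech_aux hp hcl, blockMech_aux hq hcl, ?_⟩
      have e3 : ∀ p : Fin d → (Fin d → ℝ) → ℝ,
          (fun z => blockMech p τ z * ∏ i ∈ τᶜ, p i z) = jointDensity p := fun p => by
        funext z
        exact Finset.prod_mul_prod_compl τ fun i => p i z
      rw [e3, e3]
      exact hmatch0
    · obtain ⟨e1, e2, e3⟩ := hbase' τ hτ hcl
      exact ⟨⟨e1.1, e1.2.1, e1.2.2.1⟩, ⟨e2.1, e2.2.1, e2.2.2.1⟩, e3⟩
  obtain ⟨⟨b1, b2, b3⟩, ⟨c1, c2, c3⟩, hm0⟩ := hb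
  have hPp : ∀ z, 0 < ∏ i ∈ τᶜ, p i z := fun z => Finset.prod_pos fun i _ => (hp i).1 z
  have hPq : ∀ z, 0 < ∏ i ∈ τᶜ, q i z := fun z => Finset.prod_pos fun i _ => (hq i).1 z
  have hCp : Continuous fun z => ∏ i ∈ τᶜ, p i z :=
    continuous_finsetProd _ fun i _ => (hp i).2.1.continuous
  have hCq : Continuous fun z => ∏ i ∈ τᶜ, q i z :=
    continuous_finsetProd _ fun i _ => (hq i).2.1.continuous
  have m0 := map_cancel_aux hfc.continuous hf'.continuous hg'.continuous hinv₁ hm0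
  have n0 := map_cancel_aux hf'.continuous hfc.continuous hgc.continuous hg1 hm0.symm
  let h : Fin τ.card → (Fin d → ℝ) → ℝ := fun s w => Real.log (r τ s w) - Real.log (r0 τ w)
  let h' : Fin τ.card → (Fin d → ℝ) → ℝ := fun s w => Real.log (r' τ s w) - Real.log (r0' τ w)
  have hdiff : ∀ s, Differentiable ℝ (h s) := fun s =>
    (((hr τ hτ s).2.1.differentiable (by norm_num)).log fun z => ((hr τ hτ s).1 z).ne').sub
      ((b2.differentiable (by norm_num)).log fun z => (b1 z).ne')
  have hdiff' : ∀ s, Differentiable ℝ (h' s) := fun s =>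
    (((hr' τ hτ s).2.1.differentiable (by norm_num)).log fun z => ((hr' τ hτ s).1 z).ne').sub
      ((c2.differentiable (by norm_num)).log fun z => (c1 z).ne')
  have hdep : ∀ s, DependsOnlyOn (h s) τ := fun s z w hzw => by
    change Real.log _ - Real.log _ = Real.log _ - Real.log _
    rw [(hr τ hτ s).2.2.1 z w hzw, b3 z w hzw]
  have hdep' : ∀ s, DependsOnlyOn (h' s) τ := fun s z w hzw => by
    change Real.log _ - Real.log _ = Real.log _ - Real.log _
    rw [(hr' τ hτ s).2.2.1 z w hzw, c3 z w hzw]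
  have heq : ∀ s z, h s z = h' s (φ z) := by
    intro s z
    have m1 := map_cancel_aux hfc.continuous hf'.continuous hg'.continuous hinv₁ (hmatch τ hτ s)
    have hR := ratio_aux_s9 hφ.continuous hψ.continuous hψφ (b2.continuous.mul hCp)
      ((hr τ hτ s).2.1.continuous.mul hCp) (c2.continuous.mul hCq)
      ((hr' τ hτ s).2.1.continuous.mul hCq)
      (fun z => mul_pos (b1 z) (hPp z)) (fun z => mul_pos ((hr τ hτ s).1 z) (hPp z))
      (fun z => mul_pos (c1 z) (hPq z)) (fun z => mul_pos ((hr' τ hτ s).1 z) (hPq z))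
      m0 m1 z
    simp only [Pi.mul_apply] at hR
    rw [mul_div_mul_right _ _ (hPp z).ne', mul_div_mul_right _ _ (hPq (φ z)).ne'] at hR
    change Real.log _ - Real.log _ = Real.log _ - Real.log _
    rw [← Real.log_div ((hr τ hτ s).1 z).ne' (b1 z).ne',
      ← Real.log_div ((hr' τ hτ s).1 _).ne' (c1 _).ne', hR]
  have heq' : ∀ s z, h' s z = h s (ψ z) := fun s z => by rw [heq, hφψ]
  have D1 : ∀ i ∈ τ, DependsOnlyOn (fun z => φ z i) τ :=
    core_aux hφ hdiff hdiff' hdep hdep' heq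
      (ae_comp_aux hφ.continuous (b2.continuous.mul hCp)
        (fun z => mul_pos (b1 z) (hPp z)) m0 (hdiscq τ hτ))
  have D2 : ∀ i ∈ τ, DependsOnlyOn (fun z => ψ z i) τ :=
    core_aux hψ hdiff' hdiff hdep' hdep heq'
      (ae_comp_aux hψ.continuous (c2.continuous.mul hCq)
        (fun z => mul_pos (c1 z) (hPq z)) n0 (hdiscp τ hτ))
  exact ⟨D1, blockMap_contDiff hφ τ, blockMap ψ τ, blockMap_contDiff hψ τ,
    blockMap_leftInverse hψφ D2, blockMap_leftInverse hφψ D1⟩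
end
end

section
/- Let d ≥ 1. In the nonlinear ICA setting with single-node interventions on the first d−1 variables, let two models be given: strictly positive C¹ densities (p_i)_{i∈[d]} and (p̃_k)_{k∈[d−1]} on ℝ with joints p^0(z) = ∏_{i=1}^d p_i(z_i) and p^k(z) = p̃_k(z_k)∏_{i≠k}p_i(z_i) for k ∈ [d−1], and likewise (q_i), (q̃_k) with joints q^0, q^k. Assume for every k ∈ [d−1] the interventional discrepancy (log p_k)′(x) ≠ (log p̃_k)′(x) for Lebesgue-a.e. x ∈ ℝ, and likewise (log q_k)′ ≠ (log q̃_k)′ a.e. If f, f′ : ℝ^d → ℝ^d are C¹ diffeomorphisms with f_*P^k = f′_*Q^k for all k ∈ {0,1,…,d−1}, then f′⁻¹∘f ∈ S_scaling. -/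
open MeasureTheory

noncomputable section

/-- Ratios of densities are transported by a homeomorphism. -/
lemma ratio_eq_s10 {d : ℕ} {φ ψ : (Fin d → ℝ) → (Fin d → ℝ)} (hφ : Continuous φ) (hψ : Continuous ψ)
    (h1 : Function.LeftInverse ψ φ)
    {a b u v : (Fin d → ℝ) → ℝ} (ha : Continuous a) (hb : Continuous b)
    (hu : Continuous u) (hv : Continuous v) (ha0 : ∀ z, 0 < a z) (hb0 : ∀ z, 0 < b z)
    (hu0 : ∀ z, 0 < u z) (hv0 : ∀ z, 0 < v z)
    (h0 : Measure.map φ (densityMeasure a) = densityMeasure u)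
    (hk : Measure.map φ (densityMeasure b) = densityMeasure v) (z : Fin d → ℝ) :
    b z / a z = v (φ z) / u (φ z) := by
  have key : ∀ a b : (Fin d → ℝ) → ℝ, Continuous a → Continuous b → (∀ z, 0 < a z) →
      (∀ z, 0 < b z) → densityMeasure b =
        (densityMeasure a).withDensity (fun z => ENNReal.ofReal (b z / a z)) := by
    intro a b ha hb ha0 hb0
    unfold densityMeasure
    have hm1 : Measurable fun z => ENNReal.ofReal (a z) := ha.measurable.ennreal_ofReal
    have hm2 : Measurable fun z => ENNReal.ofReal (b z / a z) :=
      (hb.measurable.div ha.measurable).ennreal_ofReal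
    rw [← withDensity_mul _ hm1 hm2]
    congr 1
    funext z
    simp only [Pi.mul_apply]
    rw [← ENNReal.ofReal_mul (ha0 z).le, mul_div_cancel₀ _ (ha0 z).ne']
  have hc1 : Continuous fun z => b z / a z := hb.div ha fun z => (ha0 z).ne'
  have hc2 : Continuous fun z => v z / u z := hv.div hu fun z => (hu0 z).ne'
  have e1 : Measure.map φ (densityMeasure b) =
      (densityMeasure u).withDensity (fun w => ENNReal.ofReal (b (ψ w) / a (ψ w))) := by
    rw [← h0, key a b ha hb ha0 hb0]
    have hm : Measurable fun w => ENNReal.ofReal (b (ψ w) / a (ψ w)) :=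
      (hc1.comp hψ).measurable.ennreal_ofReal
    ext s hs
    rw [Measure.map_apply hφ.measurable hs, withDensity_apply _ (hφ.measurable hs),
      withDensity_apply _ hs, setLIntegral_map hs hm hφ.measurable]
    simp only [h1 _]
  rw [hk, key u v hu hv hu0 hv0] at e1
  have : SigmaFinite (densityMeasure u) := by
    unfold densityMeasure
    exact SigmaFinite.withDensity_of_ne_top (by simp)
  have : (densityMeasure u).IsOpenPosMeasure := by
    have : (volume : Measure (Fin d → ℝ)) ≪ densityMeasure u := by
      unfold densityMeasure
      exact withDensity_absolutelyContinuous' hu.measurable.ennreal_ofReal.aemeasurable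
        (by filter_upwards with x; simp [hu0 x])
    exact this.isOpenPosMeasure
  have e2 := (withDensity_eq_iff_of_sigmaFinite hc2.measurable.ennreal_ofReal.aemeasurable
    (hc1.comp hψ).measurable.ennreal_ofReal.aemeasurable).1 e1
  have e3 := (Continuous.ae_eq_iff_eq (densityMeasure u)
    (ENNReal.continuous_ofReal.comp hc2) (ENNReal.continuous_ofReal.comp (hc1.comp hψ))).1 e2
  have e4 := congrFun e3 (φ z)
  simp only [Function.comp_apply, h1 z] at e4
  rw [ENNReal.ofReal_eq_ofReal_iff (div_pos (hv0 _) (hu0 _)).le (div_pos (hb0 _) (ha0 _)).le] at e4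
  exact e4.symm

/-- The intervened coordinates. -/
lemma coord_dep {d : ℕ} {φ ψ : (Fin d → ℝ) → (Fin d → ℝ)} (hφ : Continuous φ) (hψ : Continuous ψ)
    (h1 : Function.LeftInverse ψ φ) (k : Fin d)
    {p q : Fin d → ℝ → ℝ} (hp : ∀ i, IsC1Density (p i)) (hq : ∀ i, IsC1Density (q i))
    {pt qt : ℝ → ℝ} (hpt : IsC1Density pt) (hqt : IsC1Density qt)
    (hdisc : ∀ᵐ (x : ℝ) ∂volume,
        deriv (fun t => Real.log (q k t)) x ≠ deriv (fun t => Real.log (qt t)) x)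
    (h0 : Measure.map φ (densityMeasure fun z => ∏ i, p i (z i)) =
      densityMeasure fun z => ∏ i, q i (z i))
    (hk : Measure.map φ (densityMeasure fun z =>
            pt (z k) * ∏ i ∈ ({k} : Finset (Fin d))ᶜ, p i (z i)) =
        densityMeasure fun z => qt (z k) * ∏ i ∈ ({k} : Finset (Fin d))ᶜ, q i (z i))
    (z w : Fin d → ℝ) (hzw : z k = w k) : φ z k = φ w k := by
  have cont : ∀ {r : ℝ → ℝ}, IsC1Density r → Continuous r := fun h => h.2.1.continuous
  have split : ∀ (p : Fin d → ℝ → ℝ) (z : Fin d → ℝ), ∏ i, p i (z i) =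
      p k (z k) * ∏ i ∈ ({k} : Finset (Fin d))ᶜ, p i (z i) := by
    intro p z
    rw [← Finset.prod_mul_prod_compl ({k} : Finset (Fin d)), Finset.prod_singleton]
  have ratio : ∀ (p : Fin d → ℝ → ℝ) (hp : ∀ i, IsC1Density (p i)) (pt : ℝ → ℝ) (z : Fin d → ℝ),
      (pt (z k) * ∏ i ∈ ({k} : Finset (Fin d))ᶜ, p i (z i)) / ∏ i, p i (z i) =
        pt (z k) / p k (z k) := by
    intro p hp pt z
    rw [split]
    exact mul_div_mul_right _ _ (Finset.prod_pos fun i _ => (hp i).1 _).ne'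
  have R : ∀ z, pt (z k) / p k (z k) = qt (φ z k) / q k (φ z k) := by
    intro z
    have := ratio_eq_s10 hφ hψ h1
      (a := fun z => ∏ i, p i (z i)) (u := fun z => ∏ i, q i (z i))
      (continuous_finsetProd _ fun i _ => (cont (hp i)).comp (continuous_apply i))
      (((cont hpt).comp (continuous_apply k)).mul
        (continuous_finsetProd _ fun i _ => (cont (hp i)).comp (continuous_apply i)))
      (continuous_finsetProd _ fun i _ => (cont (hq i)).comp (continuous_apply i))
      (((cont hqt).comp (continuous_apply k)).mul
        (continuous_finsetProd _ fun i _ => (cont (hq i)).comp (continuous_apply i)))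
      (fun z => Finset.prod_pos fun i _ => (hp i).1 _)
      (fun z => mul_pos (hpt.1 _) (Finset.prod_pos fun i _ => (hp i).1 _))
      (fun z => Finset.prod_pos fun i _ => (hq i).1 _)
      (fun z => mul_pos (hqt.1 _) (Finset.prod_pos fun i _ => (hq i).1 _)) h0 hk z
    have e1 := ratio p hp pt z
    have e2 := ratio q hq qt (φ z)
    simp only [Function.comp_apply] at this
    rw [← e1, ← e2]
    exact this
  -- the curve
  let c : ℝ → ℝ := fun t => φ (fun i => z i + t * (w i - z i)) k
  have hc : Continuous c := by
    have : Continuous fun t : ℝ => φ (fun i => z i + t * (w i - z i)) :=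
      hφ.comp (by fun_prop)
    exact (continuous_apply k).comp this
  have hc0 : c 0 = φ z k := by simp [c]
  have hc1 : c 1 = φ w k := by simp [c]
  have hcr : ∀ t, qt (c t) / q k (c t) = pt (z k) / p k (z k) := by
    intro t
    rw [← R]
    simp [hzw]
  by_contra hne
  rw [← hc0, ← hc1] at hne
  have hpre : (Set.range c).OrdConnected := (isPreconnected_range hc).ordConnected
  obtain ⟨α, β, hαβ, hsub⟩ : ∃ α β, α < β ∧ Set.Icc α β ⊆ Set.range c := by
    rcases lt_or_gt_of_ne hne with h | h
    · exact ⟨_, _, h, hpre.out ⟨0, rfl⟩ ⟨1, rfl⟩⟩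
    · exact ⟨_, _, h, hpre.out ⟨1, rfl⟩ ⟨0, rfl⟩⟩
  have hd : ∀ x ∈ Set.Ioo α β,
      deriv (fun t => Real.log (q k t)) x = deriv (fun t => Real.log (qt t)) x := by
    intro x hx
    have hev : (fun t => Real.log (qt t)) =ᶠ[nhds x]
        fun t => Real.log (q k t) + Real.log (pt (z k) / p k (z k)) := by
      filter_upwards [Ioo_mem_nhds hx.1 hx.2] with y hy
      obtain ⟨t, rfl⟩ := hsub (Set.Ioo_subset_Icc_self hy)
      rw [← hcr t, Real.log_div (hqt.1 _).ne' ((hq k).1 _).ne']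
      ring
    rw [hev.deriv_eq, deriv_add_const]
  have : (volume : Measure ℝ) (Set.Ioo α β) = 0 :=
    measure_mono_null (fun x hx => by simpa using hd x hx) (ae_iff.1 hdisc)
  rw [Real.volume_Ioo] at this
  simp at this
  linarith

lemma prob_of_density {r : ℝ → ℝ} (hr : IsC1Density r) :
    IsProbabilityMeasure (densityMeasure₁ r) := by
  have hint : Integrable r := by
    by_contra h
    have := hr.2.2
    rw [integral_undef h] at this
    simp at this
  constructor
  unfold densityMeasure₁
  rw [withDensity_apply _ MeasurableSet.univ, Measure.restrict_univ,
    ← ofReal_integral_eq_lintegral_ofReal hint (by filter_upwards with x; exact (hr.1 x).le),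
    hr.2.2, ENNReal.ofReal_one]

lemma openPos_of_density {r : ℝ → ℝ} (hr : IsC1Density r) :
    (densityMeasure₁ r).IsOpenPosMeasure := by
  have : (volume : Measure ℝ) ≪ densityMeasure₁ r := by
    unfold densityMeasure₁
    exact withDensity_absolutelyContinuous'
      hr.2.1.continuous.measurable.ennreal_ofReal.aemeasurable
      (by filter_upwards with x; simp [hr.1 x])
  exact this.isOpenPosMeasure

lemma density_eq_pi {d : ℕ} {p : Fin d → ℝ → ℝ} (hp : ∀ i, IsC1Density (p i)) :
    densityMeasure (fun z => ∏ i, p i (z i)) = Measure.pi fun i => densityMeasure₁ (p i) := by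
  have := fun i => prob_of_density (hp i)
  have hint : ∀ i, Integrable (p i) := by
    intro i
    by_contra h
    have := (hp i).2.2
    rw [integral_undef h] at this
    simp at this
  symm
  apply Measure.pi_eq
  intro s hs
  unfold densityMeasure densityMeasure₁
  rw [withDensity_apply _ (MeasurableSet.univ_pi hs), volume_pi, Measure.restrict_pi_pi,
    ← ofReal_integral_eq_lintegral_ofReal
      (Integrable.fintype_prod fun i => (hint i).restrict)
      (by filter_upwards with x; exact Finset.prod_nonneg fun i _ => ((hp i).1 _).le),
    integral_fintype_prod_eq_prod, ENNReal.ofReal_prod_of_nonneg]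
  · refine Finset.prod_congr rfl fun i _ => ?_
    rw [withDensity_apply _ (hs i), ← ofReal_integral_eq_lintegral_ofReal (hint i).restrict
      (by filter_upwards with x; exact ((hp i).1 x).le)]
  · intro i _
    exact integral_nonneg fun x => ((hp i).1 x).le

/-- The last coordinate, on an abstract product. -/
lemma last_dep {Y : Type*} [TopologicalSpace Y] [MeasurableSpace Y] [BorelSpace Y]
    [SecondCountableTopology Y] [PreconnectedSpace Y]
    {Φ Ψ : ℝ × Y → ℝ × Y} (hΦ : Continuous Φ) (hΨ : Continuous Ψ)
    (h1 : Function.LeftInverse Ψ Φ) (h2 : Function.RightInverse Ψ Φ)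
    {h g : Y → Y} (hcont : Continuous h) (gcont : Continuous g)
    (hh : ∀ x, (Φ x).2 = h x.2) (hg : ∀ x, (Ψ x).2 = g x.2)
    (μ ν : Measure ℝ) (π κ : Measure Y) [IsProbabilityMeasure μ] [IsProbabilityMeasure ν]
    [IsProbabilityMeasure π] [IsProbabilityMeasure κ]
    [μ.IsOpenPosMeasure] [π.IsOpenPosMeasure]
    (hmap : Measure.map Φ (μ.prod π) = ν.prod κ) (b : ℝ) (w w' : Y) :
    (Ψ (b, w)).1 = (Ψ (b, w')).1 := by
  have hgΦ : ∀ x, g (Φ x).2 = x.2 := fun x => by rw [← hg, h1]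
  have hhΨ : ∀ x, h (Ψ x).2 = x.2 := fun x => by rw [← hh, h2]
  have hgh : ∀ y, g (h y) = y := fun y => by
    have := hgΦ (0, y)
    rwa [hh] at this
  have hhg : ∀ y, h (g y) = y := fun y => by
    have := hhΨ (0, y)
    rwa [hg] at this
  let S : Set (ℝ × Y) := Φ ⁻¹' (Set.Iic b ×ˢ Set.univ)
  have hS : MeasurableSet S := hΦ.measurable (measurableSet_Iic.prod MeasurableSet.univ)
  let G : Y → ENNReal := fun y => μ ((fun t => (t, y)) ⁻¹' S)
  have hG : Measurable G := measurable_measure_prodMk_right hS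
  have hGae : G =ᵐ[π] fun _ => ν (Set.Iic b) := by
    refine ae_eq_of_forall_setLIntegral_eq_of_sigmaFinite hG measurable_const ?_
    intro A hA _
    have hgA : MeasurableSet (g ⁻¹' A) := gcont.measurable hA
    have e1 : ∫⁻ y in A, G y ∂π = (μ.prod π) (S ∩ Prod.snd ⁻¹' A) := by
      rw [Measure.prod_apply_symm (hS.inter (measurable_snd hA)), ← lintegral_indicator hA]
      refine lintegral_congr fun y => ?_
      by_cases hy : y ∈ A
      · rw [Set.indicator_of_mem hy]
        refine congrArg μ ?_
        ext t
        simp [hy]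
      · rw [Set.indicator_of_notMem hy]
        have : (fun t : ℝ => (t, y)) ⁻¹' (S ∩ Prod.snd ⁻¹' A) = ∅ := by
          ext t
          simp [hy]
        rw [this, measure_empty]
    have e2 : S ∩ Prod.snd ⁻¹' A = Φ ⁻¹' (Set.Iic b ×ˢ (g ⁻¹' A)) := by
      ext x
      simp [S, hgΦ]
    have e3 : π A = κ (g ⁻¹' A) := by
      have a1 : π A = (μ.prod π) (Set.univ ×ˢ A) := by simp [Measure.prod_prod]
      have a2 : (Set.univ ×ˢ A : Set (ℝ × Y)) = Φ ⁻¹' (Set.univ ×ˢ (g ⁻¹' A)) := by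
        ext x
        simp [hgΦ]
      rw [a1, a2, ← Measure.map_apply hΦ.measurable (MeasurableSet.univ.prod hgA), hmap,
        Measure.prod_prod]
      simp
    rw [e1, e2, ← Measure.map_apply hΦ.measurable (measurableSet_Iic.prod hgA), hmap,
      Measure.prod_prod, setLIntegral_const, e3]
  let τ : Y → ℝ := fun y => (Ψ (b, h y)).1
  have hτ : Continuous τ := continuous_fst.comp (hΨ.comp (continuous_const.prodMk hcont))
  let K : Set ℝ := {t | μ (Set.Iic t) = ν (Set.Iic b)} ∪ {t | μ (Set.Ici t) = ν (Set.Iic b)}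
  have hpos : ∀ s t : ℝ, s < t → 0 < μ (Set.Ioo s t) := fun s t hst =>
    isOpen_Ioo.measure_pos μ (Set.nonempty_Ioo.2 hst)
  have hI : ∀ s t : ℝ, s < t → μ (Set.Iic s) < μ (Set.Iic t) := by
    intro s t hst
    have : μ (Set.Iic s) + μ (Set.Ioo s t) ≤ μ (Set.Iic t) := by
      rw [← measure_union _ measurableSet_Ioo]
      · exact measure_mono (Set.union_subset (Set.Iic_subset_Iic.2 hst.le)
          (fun x hx => hx.2.le))
      · exact Set.disjoint_left.2 fun x hx hx' => not_lt.2 hx hx'.1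
    exact (ENNReal.lt_add_right (measure_ne_top _ _) (hpos s t hst).ne').trans_le this
  have hI' : ∀ s t : ℝ, s < t → μ (Set.Ici t) < μ (Set.Ici s) := by
    intro s t hst
    have : μ (Set.Ici t) + μ (Set.Ioo s t) ≤ μ (Set.Ici s) := by
      rw [← measure_union _ measurableSet_Ioo]
      · exact measure_mono (Set.union_subset (Set.Ici_subset_Ici.2 hst.le)
          (fun x hx => hx.1.le))
      · exact Set.disjoint_left.2 fun x hx hx' => not_lt.2 hx hx'.2
    exact (ENNReal.lt_add_right (measure_ne_top _ _) (hpos s t hst).ne').trans_le this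
  have hK : K.Finite := by
    refine Set.Finite.union (Set.Subsingleton.finite ?_) (Set.Subsingleton.finite ?_)
    · intro s hs t ht
      by_contra hne
      simp only [Set.mem_ofPred_eq] at hs ht
      rcases lt_or_gt_of_ne hne with h | h
      · exact (hI _ _ h).ne (hs.trans ht.symm)
      · exact (hI _ _ h).ne (ht.trans hs.symm)
    · intro s hs t ht
      by_contra hne
      simp only [Set.mem_ofPred_eq] at hs ht
      rcases lt_or_gt_of_ne hne with h | h
      · exact (hI' _ _ h).ne (ht.trans hs.symm)
      · exact (hI' _ _ h).ne (hs.trans ht.symm)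
  have hτae : ∀ᵐ y ∂π, τ y ∈ K := by
    filter_upwards [hGae] with y hy
    let c : ℝ → ℝ := fun t => (Φ (t, y)).1
    have hc : Continuous c := continuous_fst.comp (hΦ.comp (by fun_prop))
    have hcinj : Function.Injective c := by
      intro s t hst
      have : Φ (s, y) = Φ (t, y) := Prod.ext hst (by rw [hh, hh])
      exact congrArg Prod.fst (h1.injective this)
    have hcτ : c (τ y) = b := by
      have a1 : Ψ (b, h y) = (τ y, y) := Prod.ext rfl (by rw [hg]; exact hgh y)
      have := h2 (b, h y)
      rw [a1] at this
      simp only [c, this]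
    have hGy : G y = μ {t | c t ≤ b} := by
      simp only [G, S, c]
      congr 1
      ext t
      simp
    rw [hGy] at hy
    rcases hc.strictMono_of_inj hcinj with hm | hm
    · left
      have : {t | c t ≤ b} = Set.Iic (τ y) := by
        ext t
        rw [Set.mem_ofPred_eq, Set.mem_Iic, ← hcτ, hm.le_iff_le]
      rw [this] at hy
      exact hy
    · right
      have : {t | c t ≤ b} = Set.Ici (τ y) := by
        ext t
        rw [Set.mem_ofPred_eq, Set.mem_Ici, ← hcτ, hm.le_iff_ge]
      rw [this] at hy
      exact hy
  have hτall : ∀ y, τ y ∈ K := by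
    have hd : Dense {y | τ y ∈ K} := Measure.dense_of_ae hτae
    have hcl : IsClosed {y | τ y ∈ K} := hK.isClosed.preimage hτ
    intro y
    have : y ∈ closure {y | τ y ∈ K} := hd y
    rwa [hcl.closure_eq] at this
  have hsub : (Set.range τ).Subsingleton :=
    hK.countable.isTotallyDisconnected _ (by rintro _ ⟨y, rfl⟩; exact hτall y)
      (isPreconnected_range hτ)
  have := hsub ⟨g w, rfl⟩ ⟨g w', rfl⟩
  simpa only [τ, hhg] using this

/-- The last coordinate, on `ℝ^(m+1)`. -/
lemma last_coord {m : ℕ} {φ ψ : (Fin (m + 1) → ℝ) → (Fin (m + 1) → ℝ)}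
    (hφ : Continuous φ) (hψ : Continuous ψ)
    (h1 : Function.LeftInverse ψ φ) (h2 : Function.RightInverse ψ φ)
    {p q : Fin (m + 1) → ℝ → ℝ} (hp : ∀ i, IsC1Density (p i)) (hq : ∀ i, IsC1Density (q i))
    (h0 : Measure.map φ (densityMeasure fun z => ∏ i, p i (z i)) =
      densityMeasure fun z => ∏ i, q i (z i))
    (hφd : ∀ (k : Fin m) (z w : Fin (m + 1) → ℝ), z k.castSucc = w k.castSucc →
      φ z k.castSucc = φ w k.castSucc)
    (hψd : ∀ (k : Fin m) (z w : Fin (m + 1) → ℝ), z k.castSucc = w k.castSucc →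
      ψ z k.castSucc = ψ w k.castSucc)
    (z w : Fin (m + 1) → ℝ) (hzw : z (Fin.last m) = w (Fin.last m)) :
    ψ z (Fin.last m) = ψ w (Fin.last m) := by
  have := fun i => prob_of_density (hp i)
  have := fun i => prob_of_density (hq i)
  have := fun i => openPos_of_density (hp i)
  let J : (Fin (m + 1) → ℝ) → ℝ × (Fin m → ℝ) := fun z => (z (Fin.last m), fun k => z k.castSucc)
  let I : ℝ × (Fin m → ℝ) → (Fin (m + 1) → ℝ) := fun x => Fin.snoc (α := fun _ => ℝ) x.2 x.1
  have hJ : Continuous J := by fun_prop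
  have hI : Continuous I := by
    refine continuous_pi fun i => ?_
    refine Fin.lastCases ?_ (fun k => ?_) i
    · simpa [I] using continuous_fst
    · simp only [I, Fin.snoc_castSucc]
      exact (continuous_apply k).comp continuous_snd
  have hIJ : ∀ z, I (J z) = z := by
    intro z
    funext i
    refine Fin.lastCases ?_ (fun k => ?_) i <;> simp [I, J]
  have hJI : ∀ x, J (I x) = x := by
    intro x
    refine Prod.ext ?_ ?_
    · simp [I, J]
    · funext k
      simp [I, J]
  have hIc : ∀ x k, I x (Fin.castSucc k) = x.2 k := by
    intro x k
    simp [I]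
  have hmp : ∀ r : Fin (m + 1) → ℝ → ℝ, (∀ i, IsC1Density (r i)) →
      Measure.map J (densityMeasure fun z => ∏ i, r i (z i)) =
        (densityMeasure₁ (r (Fin.last m))).prod
          (Measure.pi fun k : Fin m => densityMeasure₁ (r k.castSucc)) := by
    intro r hr
    have := fun i => prob_of_density (hr i)
    rw [density_eq_pi hr]
    have := (measurePreserving_piFinSuccAbove (fun i => densityMeasure₁ (r i)) (Fin.last m)).map_eq
    simp only [Fin.succAbove_last] at this
    rw [← this]
    congr 1
    funext z
    refine Prod.ext ?_ ?_
    · simp [J, Fin.insertNthEquiv]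
    · funext k
      simp [J, Fin.insertNthEquiv, Fin.init]
  have key := last_dep (Φ := J ∘ φ ∘ I) (Ψ := J ∘ ψ ∘ I)
    (hJ.comp (hφ.comp hI)) (hJ.comp (hψ.comp hI))
    (fun x => by simp [hIJ, hJI, h1 _]) (fun x => by simp [hIJ, hJI, h2 _])
    (h := fun y => (J (φ (I (0, y)))).2) (g := fun y => (J (ψ (I (0, y)))).2)
    (continuous_snd.comp (hJ.comp (hφ.comp (hI.comp (by fun_prop)))))
    (continuous_snd.comp (hJ.comp (hψ.comp (hI.comp (by fun_prop)))))
    (fun x => by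
      funext k
      exact hφd k _ _ (by rw [hIc, hIc]))
    (fun x => by
      funext k
      exact hψd k _ _ (by rw [hIc, hIc]))
    (densityMeasure₁ (p (Fin.last m))) (densityMeasure₁ (q (Fin.last m)))
    (Measure.pi fun k : Fin m => densityMeasure₁ (p k.castSucc))
    (Measure.pi fun k : Fin m => densityMeasure₁ (q k.castSucc))
    (by
      rw [← hmp p hp, ← hmp q hq, ← h0,
        Measure.map_map (hJ.comp (hφ.comp hI)).measurable hJ.measurable,
        Measure.map_map hJ.measurable hφ.measurable]
      congr 1
      funext z
      simp [hIJ])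
    (z (Fin.last m)) (J z).2 (J w).2
  have e1 : (z (Fin.last m), (J z).2) = J z := rfl
  have e2 : (z (Fin.last m), (J w).2) = J w := by rw [hzw]
  rw [e1, e2] at key
  simpa [hIJ, J] using key

/-- **Proposition (nonlinear ICA with d−1 single-node interventions).** (Here the dimension
is `d = m + 1 ≥ 1`, and the intervened targets are the first `d − 1` variables `k.castSucc`
for `k : Fin m`.) The latent graph is empty; two models given by strictly positive C¹
densities `(p i)`, `(pt k)` and `(q i)`, `(qt k)` satisfy the interventional discrepancy
`(log p k)′ ≠ (log pt k)′` a.e. (and likewise for `q`). If `f`, `f′` are C¹ diffeomorphisms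
with matching pushforwards in the unintervened regime and in every interventional regime,
then `f′⁻¹ ∘ f ∈ S_scaling`. -/
theorem ica_d_minus_one_interventions_identifiability {m : ℕ}
    (p q : Fin (m + 1) → ℝ → ℝ)
    (hp : ∀ i, IsC1Density (p i)) (hq : ∀ i, IsC1Density (q i))
    (pt qt : Fin m → ℝ → ℝ)
    (hpt : ∀ k, IsC1Density (pt k)) (hqt : ∀ k, IsC1Density (qt k))
    (hdiscp : ∀ k : Fin m, ∀ᵐ (x : ℝ) ∂volume,
        deriv (fun t => Real.log (p k.castSucc t)) x ≠
          deriv (fun t => Real.log (pt k t)) x)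
    (hdiscq : ∀ k : Fin m, ∀ᵐ (x : ℝ) ∂volume,
        deriv (fun t => Real.log (q k.castSucc t)) x ≠
          deriv (fun t => Real.log (qt k t)) x)
    (f f' g' : (Fin (m + 1) → ℝ) → (Fin (m + 1) → ℝ))
    (hf : IsC1Diffeo f) (hf' : ContDiff ℝ 1 f') (hg' : ContDiff ℝ 1 g')
    (hinv₁ : Function.LeftInverse g' f') (hinv₂ : Function.RightInverse g' f')
    (hmatch0 : Measure.map f (densityMeasure fun z => ∏ i, p i (z i)) =
        Measure.map f' (densityMeasure fun z => ∏ i, q i (z i)))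
    (hmatch : ∀ k : Fin m,
        Measure.map f (densityMeasure fun z =>
            pt k (z k.castSucc) *
              ∏ i ∈ ({k.castSucc} : Finset (Fin (m + 1)))ᶜ, p i (z i)) =
        Measure.map f' (densityMeasure fun z =>
            qt k (z k.castSucc) *
              ∏ i ∈ ({k.castSucc} : Finset (Fin (m + 1)))ᶜ, q i (z i))) :
    InSScaling (g' ∘ f) := by
  obtain ⟨hf1, g, hg1, hgf, hfg⟩ := hf
  let φ := g' ∘ f
  let ψ := g ∘ f'
  have hφ : ContDiff ℝ 1 φ := hg'.comp hf1
  have hψ : ContDiff ℝ 1 ψ := hg1.comp hf'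
  have h1 : Function.LeftInverse ψ φ := fun x => by
    simp only [φ, ψ, Function.comp_apply]
    rw [hinv₂, hgf]
  have h2 : Function.RightInverse ψ φ := fun x => by
    simp only [φ, ψ, Function.comp_apply]
    rw [hfg, hinv₁]
  have fwd : ∀ P Q : Measure (Fin (m + 1) → ℝ), Measure.map f P = Measure.map f' Q →
      Measure.map φ P = Q := by
    intro P Q h
    rw [← Measure.map_map hg'.continuous.measurable hf1.continuous.measurable, h,
      Measure.map_map hg'.continuous.measurable hf'.continuous.measurable, hinv₁.comp_eq_id,
      Measure.map_id]
  have bwd : ∀ P Q : Measure (Fin (m + 1) → ℝ), Measure.map f P = Measure.map f' Q →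
      Measure.map ψ Q = P := by
    intro P Q h
    rw [← Measure.map_map hg1.continuous.measurable hf'.continuous.measurable, ← h,
      Measure.map_map hg1.continuous.measurable hf1.continuous.measurable, hgf.comp_eq_id,
      Measure.map_id]
  have dφ : ∀ (k : Fin m) (z w : Fin (m + 1) → ℝ), z k.castSucc = w k.castSucc →
      φ z k.castSucc = φ w k.castSucc := fun k =>
    coord_dep hφ.continuous hψ.continuous h1 k.castSucc hp hq (hpt k) (hqt k) (hdiscq k)
      (fwd _ _ hmatch0) (fwd _ _ (hmatch k))
  have dψ : ∀ (k : Fin m) (z w : Fin (m + 1) → ℝ), z k.castSucc = w k.castSucc →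
      ψ z k.castSucc = ψ w k.castSucc := fun k =>
    coord_dep hψ.continuous hφ.continuous h2 k.castSucc hq hp (hqt k) (hpt k) (hdiscp k)
      (bwd _ _ hmatch0) (bwd _ _ (hmatch k))
  have lψ := last_coord hφ.continuous hψ.continuous h1 h2 hp hq (fwd _ _ hmatch0) dφ dψ
  have lφ := last_coord hψ.continuous hφ.continuous h2 h1 hq hp (bwd _ _ hmatch0) dψ dφ
  have aφ : ∀ (i : Fin (m + 1)) (z w : Fin (m + 1) → ℝ), z i = w i → φ z i = φ w i := by
    intro i
    exact Fin.lastCases lφ dφ i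
  have aψ : ∀ (i : Fin (m + 1)) (z w : Fin (m + 1) → ℝ), z i = w i → ψ z i = ψ w i := by
    intro i
    exact Fin.lastCases lψ dψ i
  refine ⟨fun i t => φ (fun _ => t) i, fun i => ⟨?_, fun t => ψ (fun _ => t) i, ?_, ?_, ?_⟩, ?_⟩
  · exact (contDiff_pi.1 (hφ.comp (contDiff_pi.2 fun _ => contDiff_id))) i
  · exact (contDiff_pi.1 (hψ.comp (contDiff_pi.2 fun _ => contDiff_id))) i
  · intro t
    have := aψ i (fun _ => φ (fun _ => t) i) (φ fun _ => t) rfl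
    simp only [this, h1 _]
  · intro t
    have := aφ i (fun _ => ψ (fun _ => t) i) (ψ fun _ => t) rfl
    simp only [this, h2 _]
  · intro z i
    exact aφ i _ _ rfl
end
end

section
/- Let d ≥ 2. There exist strictly positive C¹ probability densities p_1,…,p_d on ℝ, strictly positive C¹ intervened densities p̃_1,…,p̃_{d−2} on ℝ with (log p_k)′(x) ≠ (log p̃_k)′(x) for Lebesgue-a.e. x ∈ ℝ for every k ∈ [d−2], and a C¹ diffeomorphism φ : ℝ^d → ℝ^d with φ ∉ S_reparam, such that φ_*P^k = P^k for every k ∈ {0,1,…,d−2}, where P^0 is the measure with density ∏_{i=1}^d p_i(z_i) and P^k (k ≥ 1) the measure with density p̃_k(z_k)∏_{i≠k}p_i(z_i). Consequently, nonlinear ICA with d−2 single-node interventions on distinct targets satisfying the interventional discrepancy is not identifiable up to S_reparam: for any C¹ diffeomorphism f, the mixing functions f and f∘φ⁻¹ generate identical pushforward distributions in every regime while (f∘φ⁻¹)⁻¹∘f = φ ∉ S_reparam. -/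
open MeasureTheory

noncomputable section

/-- The first of the two unintervened coordinates. -/
def icaA (m : ℕ) : Fin (m + 2) := (Fin.last m).castSucc

/-- The second of the two unintervened coordinates. -/
def icaB (m : ℕ) : Fin (m + 2) := Fin.last (m + 1)

lemma icaA_ne_icaB (m : ℕ) : icaA m ≠ icaB m := by
  simp [icaA, icaB, Fin.ext_iff]

/-- A linear reflection of the last two coordinates. -/
def icaL (m : ℕ) : (Fin (m + 2) → ℝ) →ₗ[ℝ] (Fin (m + 2) → ℝ) where
  toFun z i :=
    if i = icaA m then 3 / 5 * z (icaA m) + 4 / 5 * z (icaB m)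
    else if i = icaB m then 4 / 5 * z (icaA m) - 3 / 5 * z (icaB m)
    else z i
  map_add' x y := by
    ext i
    simp only [Pi.add_apply]
    split_ifs <;> ring
  map_smul' c x := by
    ext i
    simp only [Pi.smul_apply, smul_eq_mul, RingHom.id_apply]
    split_ifs <;> ring

lemma icaL_a (m : ℕ) (z : Fin (m + 2) → ℝ) :
    icaL m z (icaA m) = 3 / 5 * z (icaA m) + 4 / 5 * z (icaB m) := by
  simp [icaL]

lemma icaL_b (m : ℕ) (z : Fin (m + 2) → ℝ) :
    icaL m z (icaB m) = 4 / 5 * z (icaA m) - 3 / 5 * z (icaB m) := by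
  simp [icaL, (icaA_ne_icaB m).symm]

lemma icaL_other (m : ℕ) (z : Fin (m + 2) → ℝ) (i : Fin (m + 2))
    (ha : i ≠ icaA m) (hb : i ≠ icaB m) : icaL m z i = z i := by
  simp [icaL, ha, hb]

lemma icaL_invol (m : ℕ) (z : Fin (m + 2) → ℝ) : icaL m (icaL m z) = z := by
  ext i
  by_cases ha : i = icaA m
  · subst ha
    rw [icaL_a, icaL_a, icaL_b]
    ring
  · by_cases hb : i = icaB m
    · subst hb
      rw [icaL_b, icaL_a, icaL_b]
      ring
    · rw [icaL_other m _ i ha hb, icaL_other m _ i ha hb]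

lemma icaL_contDiff (m : ℕ) : ContDiff ℝ 1 (icaL m) :=
  (LinearMap.toContinuousLinearMap (icaL m)).contDiff

lemma icaL_measurable (m : ℕ) : Measurable (icaL m) :=
  (icaL_contDiff m).continuous.measurable

lemma icaL_measurePreserving (m : ℕ) :
    MeasurePreserving (icaL m) (volume : Measure (Fin (m + 2) → ℝ)) volume := by
  refine ⟨icaL_measurable m, ?_⟩
  have hcomp : icaL m ∘ₗ icaL m = LinearMap.id := LinearMap.ext (icaL_invol m)
  have hdet : LinearMap.det (icaL m) * LinearMap.det (icaL m) = 1 := by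
    rw [← LinearMap.det_comp, hcomp, LinearMap.det_id]
  have hne : LinearMap.det (icaL m) ≠ 0 := by
    intro h
    simp [h] at hdet
  have habs : |(LinearMap.det (icaL m))⁻¹| = 1 := by
    rcases mul_self_eq_one_iff.mp hdet with h | h <;> simp [h]
  rw [Measure.map_linearMap_addHaar_eq_smul_addHaar _ hne, habs]
  simp

lemma icaL_map_density (m : ℕ) (ρ : (Fin (m + 2) → ℝ) → ℝ) (hρ : Measurable ρ)
    (h : ∀ z, ρ (icaL m z) = ρ z) :
    Measure.map (icaL m) (densityMeasure ρ) = densityMeasure ρ := by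
  have hm : Measurable fun z => ENNReal.ofReal (ρ z) := hρ.ennreal_ofReal
  ext s hs
  rw [Measure.map_apply (icaL_measurable m) hs]
  unfold densityMeasure
  rw [withDensity_apply _ (icaL_measurable m hs), withDensity_apply _ hs,
    ← (icaL_measurePreserving m).setLIntegral_comp_preimage hs hm]
  simp only [h]

/-- Gaussian density with mean `μ` and variance one. -/
def icaG (μ x : ℝ) : ℝ := ProbabilityTheory.gaussianPDFReal μ 1 x

lemma icaG_eq (μ x : ℝ) :
    icaG μ x = (√(2 * Real.pi))⁻¹ * Real.exp (-(x - μ) ^ 2 / 2) := by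
  simp [icaG, ProbabilityTheory.gaussianPDFReal]

lemma icaG_contDiff (μ : ℝ) : ContDiff ℝ 1 (icaG μ) := by
  have : icaG μ = fun x => (√(2 * Real.pi))⁻¹ * Real.exp (-(x - μ) ^ 2 / 2) :=
    funext (icaG_eq μ)
  rw [this]
  fun_prop

lemma icaG_density (μ : ℝ) : IsC1Density (icaG μ) :=
  ⟨fun x => ProbabilityTheory.gaussianPDFReal_pos μ 1 x one_ne_zero, icaG_contDiff μ,
    ProbabilityTheory.integral_gaussianPDFReal_eq_one μ one_ne_zero⟩

lemma icaG_deriv_log (μ x : ℝ) : deriv (fun t => Real.log (icaG μ t)) x = -(x - μ) := by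
  have hfun : (fun t => Real.log (icaG μ t)) =
      fun t => Real.log (√(2 * Real.pi))⁻¹ + -(t - μ) ^ 2 / 2 := by
    ext t
    rw [icaG_eq, Real.log_mul (by positivity) (Real.exp_pos _).ne', Real.log_exp]
  rw [hfun]
  have h1 : HasDerivAt (fun t : ℝ => t - μ) 1 x := (hasDerivAt_id x).sub_const μ
  have h2 := (((h1.pow 2).neg).div_const 2).const_add (Real.log (√(2 * Real.pi))⁻¹)
  refine (HasDerivAt.deriv (f' := -(x - μ)) ?_)
  convert h2 using 1
  norm_num
  ring

lemma icaG_rot (x y : ℝ) :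
    icaG 0 (3 / 5 * x + 4 / 5 * y) * icaG 0 (4 / 5 * x - 3 / 5 * y) = icaG 0 x * icaG 0 y := by
  simp only [icaG_eq]
  rw [mul_mul_mul_comm, mul_mul_mul_comm _ _ _ (Real.exp (-(y - 0) ^ 2 / 2)),
    ← Real.exp_add, ← Real.exp_add]
  congr 2
  ring

lemma icaL_map_prod (m : ℕ) (μ : Fin (m + 2) → ℝ) (ha : μ (icaA m) = 0) (hb : μ (icaB m) = 0) :
    Measure.map (icaL m) (densityMeasure fun z => ∏ i, icaG (μ i) (z i)) =
      densityMeasure fun z => ∏ i, icaG (μ i) (z i) := by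
  apply icaL_map_density
  · refine Finset.measurable_prod _ fun i _ => ?_
    exact (icaG_contDiff (μ i)).continuous.measurable.comp (measurable_pi_apply i)
  · intro z
    have key : ∀ w : Fin (m + 2) → ℝ, ∏ i, icaG (μ i) (w i) =
        (∏ j : Fin m, icaG (μ j.castSucc.castSucc) (w j.castSucc.castSucc)) *
          (icaG 0 (w (icaA m)) * icaG 0 (w (icaB m))) := by
      intro w
      rw [Fin.prod_univ_castSucc, Fin.prod_univ_castSucc, mul_assoc]
      change _ * (icaG (μ (icaA m)) (w (icaA m)) * icaG (μ (icaB m)) (w (icaB m))) = _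
      rw [ha, hb]
    rw [key, key, icaL_a, icaL_b, icaG_rot]
    congr 1
    refine Finset.prod_congr rfl fun j _ => ?_
    rw [icaL_other]
    · simp [icaA, Fin.ext_iff, j.isLt.ne]
    · have := j.isLt
      simp only [icaB, ne_eq, Fin.ext_iff, Fin.val_castSucc, Fin.val_last]
      omega

lemma icaL_map_int (m : ℕ) (k : Fin m) :
    Measure.map (icaL m) (densityMeasure fun z =>
        icaG 1 (z k.castSucc.castSucc) *
          ∏ i ∈ ({k.castSucc.castSucc} : Finset (Fin (m + 2)))ᶜ, icaG 0 (z i)) =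
      densityMeasure fun z =>
        icaG 1 (z k.castSucc.castSucc) *
          ∏ i ∈ ({k.castSucc.castSucc} : Finset (Fin (m + 2)))ᶜ, icaG 0 (z i) := by
  have hk := k.isLt
  have h := icaL_map_prod m (fun i => if i = k.castSucc.castSucc then 1 else 0)
    (by
      rw [if_neg]
      simp only [icaA, Fin.ext_iff, Fin.val_castSucc, Fin.val_last]
      omega)
    (by
      rw [if_neg]
      simp only [icaB, Fin.ext_iff, Fin.val_castSucc, Fin.val_last]
      omega)
  have hfun : (fun z : Fin (m + 2) → ℝ =>
      ∏ i, icaG (if i = k.castSucc.castSucc then 1 else 0) (z i)) = fun z =>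
      icaG 1 (z k.castSucc.castSucc) *
        ∏ i ∈ ({k.castSucc.castSucc} : Finset (Fin (m + 2)))ᶜ, icaG 0 (z i) := by
    ext z
    rw [Fintype.prod_eq_mul_prod_compl k.castSucc.castSucc, if_pos rfl]
    congr 1
    refine Finset.prod_congr rfl fun i hi => ?_
    rw [if_neg (by simpa using hi)]
  rw [← hfun]
  exact h

lemma icaL_not_reparam (m : ℕ) : ¬ InSReparam (icaL m) := by
  rintro ⟨σ, hs, -, h⟩
  have hab := icaA_ne_icaB m
  have h0 := h 0 (icaB m)
  rw [icaL_b] at h0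
  by_cases hσ : σ (icaB m) = icaA m
  · have h1 := h (Pi.single (icaB m) 1) (icaB m)
    rw [icaL_b, hσ, Pi.single_eq_of_ne hab, Pi.single_eq_same] at h1
    rw [hσ, Pi.zero_apply, Pi.zero_apply] at h0
    linarith
  · have h1 := h (Pi.single (icaA m) 1) (icaB m)
    rw [icaL_b, Pi.single_eq_of_ne hσ, Pi.single_eq_of_ne hab.symm, Pi.single_eq_same] at h1
    simp only [Pi.zero_apply] at h0
    linarith

/-- **Proposition (d−2 interventions are not sufficient for nonlinear ICA).** (Here the
dimension is `d = m + 2 ≥ 2`, and the intervened targets are the first `d − 2` variables,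
embedded via `k ↦ k.castSucc.castSucc` for `k : Fin m`.) There exist strictly positive C¹
densities `p i`, intervened densities `pt k` satisfying the interventional discrepancy, and a
C¹ diffeomorphism `φ ∉ S_reparam` (with inverse `ψ`) preserving the joint distribution of
every regime. Consequently, for any C¹ diffeomorphism `f`, the mixing functions `f` and
`f ∘ ψ = f ∘ φ⁻¹` generate identical pushforward distributions in every regime while
`(f ∘ φ⁻¹)⁻¹ ∘ f = φ ∉ S_reparam`. -/
theorem ica_d_minus_two_interventions_not_identifiable {m : ℕ} :
    ∃ (p : Fin (m + 2) → ℝ → ℝ) (pt : Fin m → ℝ → ℝ)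
      (φ ψ : (Fin (m + 2) → ℝ) → (Fin (m + 2) → ℝ)),
      (∀ i, IsC1Density (p i)) ∧ (∀ k, IsC1Density (pt k)) ∧
      (∀ k : Fin m, ∀ᵐ (x : ℝ) ∂volume,
        deriv (fun t => Real.log (p k.castSucc.castSucc t)) x ≠
          deriv (fun t => Real.log (pt k t)) x) ∧
      IsC1Diffeo φ ∧ ¬ InSReparam φ ∧
      Function.LeftInverse ψ φ ∧ Function.RightInverse ψ φ ∧
      Measure.map φ (densityMeasure fun z => ∏ i, p i (z i)) =
        densityMeasure (fun z => ∏ i, p i (z i)) ∧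
      (∀ k : Fin m,
        Measure.map φ (densityMeasure fun z =>
            pt k (z k.castSucc.castSucc) *
              ∏ i ∈ ({k.castSucc.castSucc} : Finset (Fin (m + 2)))ᶜ, p i (z i)) =
          densityMeasure fun z =>
            pt k (z k.castSucc.castSucc) *
              ∏ i ∈ ({k.castSucc.castSucc} : Finset (Fin (m + 2)))ᶜ, p i (z i)) ∧
      (∀ f : (Fin (m + 2) → ℝ) → (Fin (m + 2) → ℝ), IsC1Diffeo f →
        Measure.map f (densityMeasure fun z => ∏ i, p i (z i)) =
          Measure.map (f ∘ ψ) (densityMeasure fun z => ∏ i, p i (z i)) ∧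
        ∀ k : Fin m,
          Measure.map f (densityMeasure fun z =>
              pt k (z k.castSucc.castSucc) *
                ∏ i ∈ ({k.castSucc.castSucc} : Finset (Fin (m + 2)))ᶜ, p i (z i)) =
          Measure.map (f ∘ ψ) (densityMeasure fun z =>
              pt k (z k.castSucc.castSucc) *
                ∏ i ∈ ({k.castSucc.castSucc} : Finset (Fin (m + 2)))ᶜ, p i (z i))) := by
  have hinv : Function.LeftInverse (icaL m) (icaL m) := icaL_invol m
  have h0 : Measure.map (icaL m) (densityMeasure fun z => ∏ i, icaG 0 (z i)) =
      densityMeasure fun z => ∏ i, icaG 0 (z i) := icaL_map_prod m (fun _ => 0) rfl rfl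
  refine ⟨fun _ => icaG 0, fun _ => icaG 1, icaL m, icaL m, fun _ => icaG_density 0,
    fun _ => icaG_density 1, ?_, ⟨icaL_contDiff m, icaL m, icaL_contDiff m, hinv, hinv⟩,
    icaL_not_reparam m, hinv, hinv, h0, icaL_map_int m, ?_⟩
  · intro k
    refine Filter.Eventually.of_forall fun x => ?_
    rw [icaG_deriv_log, icaG_deriv_log]
    intro h
    linarith
  · intro f hf
    have hfm : Measurable f := hf.1.continuous.measurable
    refine ⟨?_, fun k => ?_⟩
    · rw [← Measure.map_map hfm (icaL_measurable m), h0]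
    · rw [← Measure.map_map hfm (icaL_measurable m), icaL_map_int m k]
end
end
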